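/- Let λ, b ∈ X₀([0,T₀]×D_{R₀}) satisfy Re λ(0,0) > 0, |λ(t,x) − λ(0,x)| ≤ Λ·m(t) and |b(t,x)| ≤ B·m(t)/|log t| on [0,T₀]×D_{R₀} for a weight function m, with 0 < T₀ < 1/e. Then there exist T, R, r > 0 such that, with W = {(t,x) ∈ [0,T]×D_R : φ(t)/r + |x| < R}, for every holomorphic ψ on D_R the linear equation t·∂v/∂t − λ(t,x)·v − b(t,x)·∂v/∂x = 0 has a unique solution v ∈ X₁(W) satisfying t^{−λ(0,x)}·v(t,x) → ψ(x) as t → 0⁺ uniformly on D_{R'} for every 0 < R' < R; moreover this solution v belongs to X₁^d for every 0 < d < Re λ(0,0). -/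

import Mathlib

open Set Filter MeasureTheory Metric Topology Complex

noncomputable section

/-- A *weight function* on `(0, T₀]`: increasing, continuous and positive on `(0,T₀]`,
with `∫₀^{T₀} m(τ)/τ dτ < ∞`. -/
def IsWeight (T₀ : ℝ) (m : ℝ → ℝ) : Prop :=
  MonotoneOn m (Set.Ioc 0 T₀) ∧ ContinuousOn m (Set.Ioc 0 T₀) ∧
    (∀ t ∈ Set.Ioc (0 : ℝ) T₀, 0 < m t) ∧
    MeasureTheory.IntegrableOn (fun τ => m τ / τ) (Set.Ioc 0 T₀)

/-- `φ(t) = ∫₀ᵗ m(τ)/τ dτ`. -/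
def wphi (m : ℝ → ℝ) (t : ℝ) : ℝ := ∫ τ in Set.Ioc (0 : ℝ) t, m τ / τ

/-- `f ∈ X₀(S × D_R)` : continuous on `S × D_R`, holomorphic in `x` for each fixed `t`. -/
def MemX0 (S : Set ℝ) (R : ℝ) (f : ℝ → ℂ → ℂ) : Prop :=
  ContinuousOn (fun p : ℝ × ℂ => f p.1 p.2) (S ×ˢ Metric.ball (0 : ℂ) R) ∧
    ∀ t ∈ S, DifferentiableOn ℂ (f t) (Metric.ball (0 : ℂ) R)

/-- `f ∈ X₁(S × D_R)` : `f ∈ X₀`, with a `t`-derivative for `t > 0` such that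
`t ∂f/∂t ∈ X₀`. -/
def MemX1 (S : Set ℝ) (R : ℝ) (f : ℝ → ℂ → ℂ) : Prop :=
  MemX0 S R f ∧
    ∃ g : ℝ → ℂ → ℂ, MemX0 S R g ∧
      ∀ t ∈ S, 0 < t → ∀ x ∈ Metric.ball (0 : ℂ) R,
        HasDerivWithinAt (fun s => f s x) (g t x / (t : ℂ)) S t

/-- `u` solves equation (E) :
`t ∂u/∂t = a + λ u + b ∂u/∂x + Σ_{j+α≥2} a_{j,α} u^j (∂u/∂x)^α` on `(0,T] × D_R`. -/
def SolvesE (T R : ℝ) (a lam b : ℝ → ℂ → ℂ) (c : ℕ → ℕ → ℝ → ℂ → ℂ)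
    (u : ℝ → ℂ → ℂ) : Prop :=
  ∀ t ∈ Set.Ioc (0 : ℝ) T, ∀ x ∈ Metric.ball (0 : ℂ) R,
    HasDerivWithinAt (fun s => u s x)
      ((a t x + lam t x * u t x + b t x * deriv (u t) x +
          ∑' p : ℕ × ℕ, c p.1 p.2 t x * u t x ^ p.1 * deriv (u t) x ^ p.2) / (t : ℂ))
      (Set.Ioc 0 T) t

/-- `u` is a germ (near the origin) solution of equation (E). -/
def GermSol (T₀ R₀ : ℝ) (a lam b : ℝ → ℂ → ℂ) (c : ℕ → ℕ → ℝ → ℂ → ℂ)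
    (u : ℝ → ℂ → ℂ) : Prop :=
  ∃ T, 0 < T ∧ T ≤ T₀ ∧ ∃ R, 0 < R ∧ R ≤ R₀ ∧ SolvesE T R a lam b c u

/-- the germ class `X₁^d`. -/
def MemX1d (d : ℝ) (u : ℝ → ℂ → ℂ) : Prop :=
  ∃ T > (0 : ℝ), ∃ R > (0 : ℝ), MemX1 (Set.Icc 0 T) R u ∧
    ∃ C > (0 : ℝ), ∀ t ∈ Set.Icc (0 : ℝ) T, ∀ x ∈ Metric.ball (0 : ℂ) R,
      max ‖u t x‖ ‖deriv (u t) x‖ ≤ C * t ^ d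

/-- the germ class `X₁⁺ = ⋃_{d>0} X₁^d`. -/
def MemX1plus (u : ℝ → ℂ → ℂ) : Prop := ∃ d > (0 : ℝ), MemX1d d u

/-- the germ class `X₁^{(μ)} = ⋂_{0<a<μ} X₁^a`. -/
def MemX1lt (μ : ℝ) (u : ℝ → ℂ → ℂ) : Prop := ∀ a : ℝ, 0 < a → a < μ → MemX1d a u

/-- two functions agree as germs on some `(0,ε] × D_δ`. -/
def GermEqPos (u v : ℝ → ℂ → ℂ) : Prop :=
  ∃ ε > (0 : ℝ), ∃ δ > (0 : ℝ), ∀ t ∈ Set.Ioc (0 : ℝ) ε, ∀ x ∈ Metric.ball (0 : ℂ) δ,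
    u t x = v t x

/-- the class `𝒳₁` (built on `X₁([0,T]×D_R)`) : the limsup-condition
`limsup_{ρ→0⁺} [ lim_{σ→0⁺} (1/ρ²) sup_{(0,σ)×D_ρ} |u| ] = 0`. -/
def MemXscrIcc (u : ℝ → ℂ → ℂ) : Prop :=
  (∃ T > (0 : ℝ), ∃ R > (0 : ℝ), MemX1 (Set.Icc 0 T) R u) ∧
    ∀ ε > (0 : ℝ), ∃ ρ₁ > (0 : ℝ), ∀ ρ, 0 < ρ → ρ < ρ₁ →
      ∃ σ > (0 : ℝ), ∀ t, 0 < t → t < σ → ∀ x ∈ Metric.ball (0 : ℂ) ρ,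
        ‖u t x‖ ≤ ε * ρ ^ 2

/-- the class `𝒳₁` (built on `X₁((0,T]×D_R)`). -/
def MemXscrIoc (u : ℝ → ℂ → ℂ) : Prop :=
  (∃ T > (0 : ℝ), ∃ R > (0 : ℝ), MemX1 (Set.Ioc 0 T) R u) ∧
    ∀ ε > (0 : ℝ), ∃ ρ₁ > (0 : ℝ), ∀ ρ, 0 < ρ → ρ < ρ₁ →
      ∃ σ > (0 : ℝ), ∀ t, 0 < t → t < σ → ∀ x ∈ Metric.ball (0 : ℂ) ρ,
        ‖u t x‖ ≤ ε * ρ ^ 2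

/-- `ψ` is holomorphic in a neighborhood of `x = 0`. -/
def HoloGerm (ψ : ℂ → ℂ) : Prop :=
  ∃ r > (0 : ℝ), DifferentiableOn ℂ ψ (Metric.ball (0 : ℂ) r)

/-- `t^{-λ(0,x)} w(t,x) → ψ(x)` as `t → 0⁺`, uniformly near `x = 0`,
where `t^{-λ(0,x)} = exp(-λ(0,x) log t)`. -/
def BndLimit (lam0 : ℂ → ℂ) (w : ℝ → ℂ → ℂ) (ψ : ℂ → ℂ) : Prop :=
  ∃ δ > (0 : ℝ), TendstoUniformlyOn
    (fun t x => Complex.exp (-(lam0 x) * (Real.log t : ℂ)) * w t x) ψ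
    (nhdsWithin 0 (Set.Ioi 0)) (Metric.ball (0 : ℂ) δ)

/-- `lim_{t→0⁺} sup_{x ∈ D_R} |t^{-d} u(t,x)| = 0`. -/
def SmalloOnBall (d R : ℝ) (u : ℝ → ℂ → ℂ) : Prop :=
  ∀ ε > (0 : ℝ), ∃ τ > (0 : ℝ), ∀ t, 0 < t → t < τ → ∀ x ∈ Metric.ball (0 : ℂ) R,
    ‖u t x‖ ≤ ε * t ^ d

/-- `f ∈ X₀(W)` for a general domain `W ⊆ ℝ × ℂ`. -/
def MemX0W (W : Set (ℝ × ℂ)) (f : ℝ → ℂ → ℂ) : Prop :=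
  ContinuousOn (fun p : ℝ × ℂ => f p.1 p.2) W ∧
    ∀ t : ℝ, DifferentiableOn ℂ (f t) {y : ℂ | (t, y) ∈ W}

/-- `f ∈ X₁(W)` for a general domain `W ⊆ ℝ × ℂ`. -/
def MemX1W (W : Set (ℝ × ℂ)) (f : ℝ → ℂ → ℂ) : Prop :=
  MemX0W W f ∧
    ∃ g : ℝ → ℂ → ℂ, MemX0W W g ∧
      ∀ t x, (t, x) ∈ W → 0 < t →
        HasDerivWithinAt (fun s => f s x) (g t x / (t : ℂ)) {s : ℝ | (s, x) ∈ W} t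

/-- `w` solves `t ∂w/∂t = λ w + b ∂w/∂x + g` on the domain `W`. -/
def SolvesLW (W : Set (ℝ × ℂ)) (lam b g w : ℝ → ℂ → ℂ) : Prop :=
  ∀ t x, (t, x) ∈ W → 0 < t →
    HasDerivWithinAt (fun s => w s x)
      ((lam t x * w t x + b t x * deriv (w t) x + g t x) / (t : ℂ))
      {s : ℝ | (s, x) ∈ W} t

/-- `v` solves the homogeneous linear equation `t ∂v/∂t = λ v + b ∂v/∂x`
on the product domain `S × D_R`. -/
def SolvesLin (S : Set ℝ) (R : ℝ) (lam b : ℝ → ℂ → ℂ) (v : ℝ → ℂ → ℂ) : Prop :=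
  ∀ t ∈ S, 0 < t → ∀ x ∈ Metric.ball (0 : ℂ) R,
    HasDerivWithinAt (fun s => v s x)
      ((lam t x * v t x + b t x * deriv (v t) x) / (t : ℂ)) S t

/-- the characteristic domain `𝒟 = ⋃_{x₀ ∈ D_{R₁}} {(t, φ(t;T,x₀)) : 0 < t ≤ T}`. -/
def Dchar (T R₁ : ℝ) (Φ : ℝ → ℝ → ℂ → ℂ) : Set (ℝ × ℂ) :=
  {p : ℝ × ℂ | p.1 ∈ Set.Ioc (0 : ℝ) T ∧ ∃ x₀ ∈ Metric.ball (0 : ℂ) R₁, p.2 = Φ p.1 T x₀}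

/-- the domain `W = {(t,x) ∈ [0,T] × D_R : φ(t)/r + |x| < R}`. -/
def Wset (m : ℝ → ℝ) (T R r : ℝ) : Set (ℝ × ℂ) :=
  {p : ℝ × ℂ | p.1 ∈ Set.Icc (0 : ℝ) T ∧ p.2 ∈ Metric.ball (0 : ℂ) R ∧
    wphi m p.1 / r + ‖p.2‖ < R}

/-! Writing `v = t ^ λ(0,x) w` turns the equation into the transport equation
`t ∂w/∂t = c w + b ∂w/∂x` with `c = λ(t,x) - λ(0,x) + b (∂λ/∂x)(0,x) log t`, and the condition at
`t = 0` into `w(0,x) = ψ(x)`. Both coefficients are `O(m)`, since `b log t` is. Integrating against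
`dt/t` from `t = 0`, the `n`-th term of the Picard series gains, by Nagumo's form of Cauchy's
estimate, the factor `(K φ(t) / (R - |x|)) ^ n`: differentiation costs a factor of order
`n / (R - |x|)`, which integrating `φ ^ (n - 1) dφ` compensates. On `W` one has
`φ(t) / (R - |x|) < r`, so the series converges geometrically once `K r < 1`. Applied to the
difference of two solutions, the same estimate shows that it vanishes near `x = 0`, hence on the
discs `W ∩ {t = const}` by the identity theorem.
-/

section ParametrizedHolomorphic

theorem continuousOn_uncurry_of_tendstoLocallyUniformlyOn {X Y E : Type*} [TopologicalSpace X]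
    [TopologicalSpace Y] [UniformSpace E] {s : Set X} {u : Set Y} {f : X → Y → E}
    (hc : ∀ a ∈ s, ContinuousOn (f a) u)
    (hf : ∀ a ∈ s, TendstoLocallyUniformlyOn f (f a) (𝓝[s] a) u) :
    ContinuousOn (fun p : X × Y => f p.1 p.2) (s ×ˢ u) := by
  rintro ⟨a, y⟩ ⟨ha, hy⟩
  rw [ContinuousWithinAt, nhdsWithin_prod_eq]
  refine tendsto_comp_of_locally_uniform_limit_within (hc a ha y hy) tendsto_snd fun v hv => ?_
  obtain ⟨t, ht, hft⟩ := hf a ha v hv y hy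
  exact ⟨t, ht, tendsto_fst.eventually hft⟩

theorem tendstoLocallyUniformlyOn_of_continuousOn_uncurry {X Y E : Type*} [TopologicalSpace X]
    [TopologicalSpace Y] [LocallyCompactSpace Y] [UniformSpace E] {s : Set X} {u : Set Y}
    {f : X → Y → E} (hu : IsOpen u) (hf : ContinuousOn (fun p : X × Y => f p.1 p.2) (s ×ˢ u))
    {a : X} (ha : a ∈ s) :
    TendstoLocallyUniformlyOn f (f a) (𝓝[s] a) u := by
  rw [tendstoLocallyUniformlyOn_iff_forall_isCompact hu]
  intro k hku hk v hv
  obtain ⟨w, hw, hwv⟩ := hk.mem_uniformity_of_prod (f := f) (hf.mono (prod_mono_right hku)) ha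
    (symm_le_uniformity hv)
  filter_upwards [hw] with b hb y hy using hwv b hb y hy

variable {E : Type*} [NormedAddCommGroup E] [NormedSpace ℂ E]

theorem continuousOn_deriv_of_continuousOn_uncurry [CompleteSpace E] {X : Type*}
    [TopologicalSpace X] {s : Set X} {u : Set ℂ} {f : X → ℂ → E} (hu : IsOpen u)
    (hf : ContinuousOn (fun p : X × ℂ => f p.1 p.2) (s ×ˢ u))
    (hd : ∀ a ∈ s, DifferentiableOn ℂ (f a) u) :
    ContinuousOn (fun p : X × ℂ => deriv (f p.1) p.2) (s ×ˢ u) :=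
  continuousOn_uncurry_of_tendstoLocallyUniformlyOn (f := fun a => deriv (f a))
    (fun a ha => ((hd a ha).deriv hu).continuousOn) fun _ ha =>
    (tendstoLocallyUniformlyOn_of_continuousOn_uncurry hu hf ha).deriv
      (eventually_nhdsWithin_of_forall hd) hu

theorem norm_deriv_le_of_forall_mem_closedBall_norm_le {f : ℂ → E} {c : ℂ} {r C : ℝ}
    (hr : 0 < r) (hd : DifferentiableOn ℂ f (closedBall c r))
    (hC : ∀ z ∈ closedBall c r, ‖f z‖ ≤ C) : ‖deriv f c‖ ≤ C / r :=
  norm_deriv_le_of_forall_mem_sphere_norm_le hr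
    (DifferentiableOn.diffContOnCl (by rwa [closure_ball _ hr.ne']))
    fun z hz => hC z (sphere_subset_closedBall hz)

theorem one_add_inv_succ_pow_le_exp_one (n : ℕ) :
    (1 + 1 / ((n : ℝ) + 1)) ^ (n + 1) ≤ Real.exp 1 :=
  calc (1 + 1 / ((n : ℝ) + 1)) ^ (n + 1)
      ≤ Real.exp (1 / ((n : ℝ) + 1)) ^ (n + 1) := by
        gcongr
        rw [add_comm]
        exact Real.add_one_le_exp _
    _ = Real.exp 1 := by
        rw [← Real.exp_nat_mul]
        push_cast
        rw [mul_one_div_cancel (by positivity)]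

-- Nagumo's lemma: Cauchy's estimate on the disc of radius `(ρ - ‖x‖) / (n + 2)`.
theorem norm_deriv_le_of_norm_le_div_pow {f : ℂ → E} {ρ A : ℝ} {n : ℕ} (hA : 0 ≤ A)
    (hd : DifferentiableOn ℂ f (ball 0 ρ))
    (hf : ∀ y ∈ ball (0 : ℂ) ρ, ‖f y‖ ≤ A / (ρ - ‖y‖) ^ n) {x : ℂ} (hx : x ∈ ball (0 : ℂ) ρ) :
    ‖deriv f x‖ ≤ Real.exp 1 * (n + 1) * A / (ρ - ‖x‖) ^ (n + 1) := by
  have hδ : 0 < ρ - ‖x‖ := sub_pos.2 (mem_ball_zero_iff.1 hx)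
  set δ := ρ - ‖x‖
  have hr : 0 < δ / (n + 2) := by positivity
  have hgap : ∀ y ∈ closedBall x (δ / (n + 2)), δ * ((n + 1) / (n + 2)) ≤ ρ - ‖y‖ := by
    intro y hy
    have hyx : ‖y‖ ≤ ‖x‖ + δ / (n + 2) := by
      rw [mem_closedBall_iff_norm] at hy
      linarith [norm_le_norm_add_norm_sub' y x]
    have : δ * ((n + 1) / (n + 2)) = δ - δ / (n + 2) := by field_simp; ring
    linarith
  have hgap_pos : 0 < δ * ((n + 1) / (n + 2)) := by positivity
  have hsub : closedBall x (δ / (n + 2)) ⊆ ball 0 ρ := fun y hy =>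
    mem_ball_zero_iff.2 (sub_pos.1 (hgap_pos.trans_le (hgap y hy)))
  calc ‖deriv f x‖ ≤ A / (δ * ((n + 1) / (n + 2))) ^ n / (δ / (n + 2)) := by
        refine norm_deriv_le_of_forall_mem_closedBall_norm_le hr (hd.mono hsub) fun y hy => ?_
        refine (hf y (hsub hy)).trans ?_
        gcongr
        exact hgap y hy
    _ = (1 + 1 / ((n : ℝ) + 1)) ^ (n + 1) * (n + 1) * A / δ ^ (n + 1) := by
        rw [show 1 + 1 / ((n : ℝ) + 1) = (n + 2) / (n + 1) by field_simp; ring]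
        simp only [mul_pow, div_pow, pow_succ]
        field_simp
    _ ≤ Real.exp 1 * (n + 1) * A / δ ^ (n + 1) := by
        gcongr
        exact one_add_inv_succ_pow_le_exp_one n

end ParametrizedHolomorphic

section Primitives

variable {E : Type*} [NormedAddCommGroup E] {f : ℝ → E} {g : ℝ → ℝ} {a b : ℝ}

theorem Ioc_mem_nhdsWithin_Icc_of_lt {t : ℝ} (ht : a < t) : Ioc a b ∈ 𝓝[Icc a b] t := by
  filter_upwards [self_mem_nhdsWithin, mem_nhdsWithin_of_mem_nhds (Ioi_mem_nhds ht)] with s hs hs'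
    using ⟨hs', hs.2⟩

theorem intervalIntegrable_of_integrableOn_Ioc (hi : IntegrableOn f (Ioc a b)) {t : ℝ}
    (ht : t ∈ Icc a b) : IntervalIntegrable f volume a t :=
  (intervalIntegrable_iff_integrableOn_Ioc_of_le ht.1).2
    (hi.mono_set (Ioc_subset_Ioc_right ht.2))

variable [NormedSpace ℝ E]

theorem continuousOn_setIntegral_Ioc (hi : IntegrableOn f (Ioc a b)) :
    ContinuousOn (fun t => ∫ τ in Ioc a t, f τ) (Icc a b) :=
  intervalIntegral.continuousOn_primitive (by rwa [integrableOn_Icc_iff_integrableOn_Ioc])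

theorem hasDerivWithinAt_setIntegral_Ioc [CompleteSpace E] (hi : IntegrableOn f (Ioc a b))
    (hc : ContinuousOn f (Ioc a b)) {t : ℝ} (ht : t ∈ Ioc a b) :
    HasDerivWithinAt (fun t => ∫ τ in Ioc a t, f τ) (f t) (Icc a b) t := by
  have htI : t ∈ Icc a b := Ioc_subset_Icc_self ht
  have : Fact (t ∈ Icc a b) := ⟨htI⟩
  have hnhds := Ioc_mem_nhdsWithin_Icc_of_lt (b := b) ht.1
  refine (intervalIntegral.integral_hasDerivWithinAt_right (s := Icc a b) (t := Icc a b)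
    (intervalIntegrable_of_integrableOn_Ioc hi htI) ⟨_, hnhds, hi.aestronglyMeasurable⟩
    ((hc t ht).mono_of_mem_nhdsWithin hnhds)).congr_of_mem
    (fun s hs => (intervalIntegral.integral_of_le hs.1).symm) htI

theorem norm_setIntegral_Ioc_sub_le (hf : IntegrableOn f (Ioc a b)) (hg : IntegrableOn g (Ioc a b))
    (hfg : ∀ τ ∈ Ioc a b, ‖f τ‖ ≤ g τ) {s t : ℝ} (hs : s ∈ Icc a b) (ht : t ∈ Icc a b) :
    ‖(∫ τ in Ioc a t, f τ) - ∫ τ in Ioc a s, f τ‖ ≤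
      |(∫ τ in Ioc a t, g τ) - ∫ τ in Ioc a s, g τ| := by
  have hfs := intervalIntegrable_of_integrableOn_Ioc hf hs
  have hft := intervalIntegrable_of_integrableOn_Ioc hf ht
  have hgs := intervalIntegrable_of_integrableOn_Ioc hg hs
  have hgt := intervalIntegrable_of_integrableOn_Ioc hg ht
  simp only [← intervalIntegral.integral_of_le hs.1, ← intervalIntegral.integral_of_le ht.1]
  rw [intervalIntegral.integral_interval_sub_left hft hfs,
    intervalIntegral.integral_interval_sub_left hgt hgs]
  refine intervalIntegral.norm_integral_le_abs_of_norm_le ?_ (hgs.symm.trans hgt)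
  refine (ae_restrict_iff' measurableSet_uIoc).2 (.of_forall fun τ hτ => hfg τ ?_)
  exact ⟨(le_min hs.1 ht.1).trans_lt hτ.1, hτ.2.trans (max_le hs.2 ht.2)⟩

end Primitives

namespace MemX0

variable {S S' : Set ℝ} {T R R' : ℝ} {f g : ℝ → ℂ → ℂ}

theorem mono (hf : MemX0 S R f) (hS : S' ⊆ S) (hR : R' ≤ R) : MemX0 S' R' f :=
  ⟨hf.1.mono (prod_mono hS (ball_subset_ball hR)),
    fun t ht => (hf.2 t (hS ht)).mono (ball_subset_ball hR)⟩

theorem differentiableAt (hf : MemX0 S R f) {t : ℝ} (ht : t ∈ S) {x : ℂ} (hx : x ∈ ball 0 R) :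
    DifferentiableAt ℂ (f t) x :=
  (hf.2 t ht).differentiableAt (isOpen_ball.mem_nhds hx)

theorem continuousOn_time (hf : MemX0 S R f) {x : ℂ} (hx : x ∈ ball 0 R) :
    ContinuousOn (fun t => f t x) S :=
  hf.1.comp (f := fun t => (t, x)) (by fun_prop) fun _ ht => ⟨ht, hx⟩

theorem add (hf : MemX0 S R f) (hg : MemX0 S R g) : MemX0 S R fun t x => f t x + g t x :=
  ⟨hf.1.add hg.1, fun t ht => (hf.2 t ht).add (hg.2 t ht)⟩

theorem sub (hf : MemX0 S R f) (hg : MemX0 S R g) : MemX0 S R fun t x => f t x - g t x :=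
  ⟨hf.1.sub hg.1, fun t ht => (hf.2 t ht).sub (hg.2 t ht)⟩

theorem mul (hf : MemX0 S R f) (hg : MemX0 S R g) : MemX0 S R fun t x => f t x * g t x :=
  ⟨hf.1.mul hg.1, fun t ht => (hf.2 t ht).mul (hg.2 t ht)⟩

theorem const_space {a : ℝ → ℂ} (ha : ContinuousOn a S) : MemX0 S R fun t _ => a t :=
  ⟨ha.comp continuousOn_fst fun _ hp => hp.1, fun _ _ => differentiableOn_const _⟩

theorem const_time {a : ℂ → ℂ} (ha : DifferentiableOn ℂ a (ball 0 R)) : MemX0 S R fun _ => a :=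
  ⟨ha.continuousOn.comp continuousOn_snd fun _ hp => hp.2, fun _ _ => ha⟩

theorem deriv (hf : MemX0 S R f) : MemX0 S R fun t => deriv (f t) :=
  ⟨continuousOn_deriv_of_continuousOn_uncurry isOpen_ball hf.1 hf.2,
    fun t ht => (hf.2 t ht).deriv isOpen_ball⟩

theorem exists_norm_le {ρ : ℝ} (hf : MemX0 (Icc 0 T) R f) (hρ : ρ < R) :
    ∃ M, 0 ≤ M ∧ ∀ t ∈ Icc 0 T, ∀ x ∈ ball (0 : ℂ) ρ, ‖f t x‖ ≤ M := by
  have hK : IsCompact (Icc 0 T ×ˢ closedBall (0 : ℂ) ρ) :=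
    isCompact_Icc.prod (isCompact_closedBall _ _)
  obtain ⟨M, hM⟩ := hK.exists_bound_of_continuousOn
    (hf.1.mono (prod_mono_right (closedBall_subset_ball hρ)))
  exact ⟨max M 0, le_max_right _ _, fun t ht x hx =>
    (hM (t, x) ⟨ht, ball_subset_closedBall hx⟩).trans (le_max_left _ _)⟩

theorem integrableOn_of_norm_le (hf : MemX0 (Ioc 0 T) R f) {G : ℝ → ℝ}
    (hG : IntegrableOn G (Ioc 0 T)) {x : ℂ} (hx : x ∈ ball 0 R)
    (hfG : ∀ τ ∈ Ioc 0 T, ‖f τ x‖ ≤ G τ) : IntegrableOn (fun τ => f τ x) (Ioc 0 T) :=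
  hG.mono' ((hf.continuousOn_time hx).aestronglyMeasurable measurableSet_Ioc)
    ((ae_restrict_iff' measurableSet_Ioc).2 (.of_forall hfG))

theorem differentiableOn_setIntegral_Ioc (hf : MemX0 (Ioc 0 T) R f)
    (hdom : ∀ ρ < R, ∃ G : ℝ → ℝ, IntegrableOn G (Ioc 0 T) ∧
      ∀ τ ∈ Ioc 0 T, ∀ x ∈ ball (0 : ℂ) ρ, ‖f τ x‖ ≤ G τ) :
    DifferentiableOn ℂ (fun x => ∫ τ in Ioc 0 T, f τ x) (ball 0 R) := by
  intro x hx
  obtain ⟨ρ, hxρ, hρR⟩ := exists_between (mem_ball_zero_iff.1 hx)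
  obtain ⟨G, hG, hfG⟩ := hdom ρ hρR
  obtain ⟨δ, hδ, hδρ⟩ : ∃ δ > 0, 2 * δ = ρ - ‖x‖ := ⟨(ρ - ‖x‖) / 2, by linarith, by ring⟩
  have hsub : ∀ y ∈ ball x δ, closedBall y δ ⊆ ball 0 ρ := by
    intro y hy z hz
    rw [mem_ball_iff_norm] at hy
    rw [mem_closedBall_iff_norm] at hz
    rw [mem_ball_zero_iff]
    linarith [norm_le_norm_add_norm_sub' z y, norm_le_norm_add_norm_sub' y x]
  have hmem : ∀ y ∈ ball x δ, y ∈ ball (0 : ℂ) ρ := fun y hy =>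
    hsub y hy (mem_closedBall_self hδ.le)
  have hρ := ball_subset_ball (x := (0 : ℂ)) hρR.le
  have hint : ∀ y ∈ ball x δ, IntegrableOn (fun τ => f τ y) (Ioc 0 T) := fun y hy =>
    hf.integrableOn_of_norm_le hG (hρ (hmem y hy)) fun τ hτ => hfG τ hτ y (hmem y hy)
  have hderiv : ∀ τ ∈ Ioc 0 T, ∀ y ∈ ball x δ, ‖_root_.deriv (f τ) y‖ ≤ G τ / δ :=
    fun τ hτ y hy => norm_deriv_le_of_forall_mem_closedBall_norm_le hδ
      ((hf.2 τ hτ).mono ((hsub y hy).trans hρ)) fun z hz => hfG τ hτ z (hsub y hy hz)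
  have hintegral := hasDerivAt_integral_of_dominated_loc_of_deriv_le (F := fun y τ => f τ y)
    (F' := fun y τ => _root_.deriv (f τ) y) (ball_mem_nhds x hδ)
    (by filter_upwards [ball_mem_nhds x hδ] with y hy using (hint y hy).aestronglyMeasurable)
    (hint x (mem_ball_self hδ))
    ((hf.deriv.continuousOn_time hx).aestronglyMeasurable measurableSet_Ioc)
    ((ae_restrict_iff' measurableSet_Ioc).2 (.of_forall hderiv)) (hG.div_const δ)
    ((ae_restrict_iff' measurableSet_Ioc).2 (.of_forall fun τ hτ y hy =>
      (hf.differentiableAt hτ (hρ (hmem y hy))).hasDerivAt))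
  exact hintegral.2.differentiableAt.differentiableWithinAt

theorem setIntegral_Ioc (hf : MemX0 (Ioc 0 T) R f)
    (hdom : ∀ ρ < R, ∃ G : ℝ → ℝ, IntegrableOn G (Ioc 0 T) ∧
      ∀ τ ∈ Ioc 0 T, ∀ x ∈ ball (0 : ℂ) ρ, ‖f τ x‖ ≤ G τ) :
    MemX0 (Icc 0 T) R fun t x => ∫ τ in Ioc 0 t, f τ x := by
  have hd : ∀ t ∈ Icc 0 T, DifferentiableOn ℂ (fun x => ∫ τ in Ioc 0 t, f τ x) (ball 0 R) := by
    intro t ht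
    have hsub : Ioc 0 t ⊆ Ioc 0 T := Ioc_subset_Ioc_right ht.2
    refine (hf.mono hsub le_rfl).differentiableOn_setIntegral_Ioc fun ρ hρ => ?_
    obtain ⟨G, hG, hfG⟩ := hdom ρ hρ
    exact ⟨G, hG.mono_set hsub, fun τ hτ => hfG τ (hsub hτ)⟩
  refine ⟨continuousOn_uncurry_of_tendstoLocallyUniformlyOn (f := fun t x => ∫ τ in Ioc 0 t, f τ x)
    (fun t ht => (hd t ht).continuousOn) fun t ht => ?_, hd⟩
  rw [Metric.tendstoLocallyUniformlyOn_iff]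
  intro ε hε x hx
  obtain ⟨ρ, hxρ, hρR⟩ := exists_between (mem_ball_zero_iff.1 hx)
  obtain ⟨G, hG, hfG⟩ := hdom ρ hρR
  refine ⟨ball 0 ρ, mem_nhdsWithin_of_mem_nhds (isOpen_ball.mem_nhds (mem_ball_zero_iff.2 hxρ)), ?_⟩
  have hGt := Metric.continuousWithinAt_iff'.1 (continuousOn_setIntegral_Ioc hG t ht) ε hε
  filter_upwards [hGt, self_mem_nhdsWithin] with s hst hs y hy
  rw [dist_comm, dist_eq_norm]
  exact (norm_setIntegral_Ioc_sub_le (hf.integrableOn_of_norm_le hG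
    (ball_subset_ball hρR.le hy) fun τ hτ => hfG τ hτ y hy) hG (fun τ hτ => hfG τ hτ y hy)
    ht hs).trans_lt hst

end MemX0

/-- A weight function without the requirements of monotonicity and strict positivity: a continuous
nonnegative function on `(0, T]` satisfying Dini's condition `∫₀ᵀ m(τ)/τ dτ < ∞`. -/
structure IsDini (T : ℝ) (m : ℝ → ℝ) : Prop where
  continuousOn : ContinuousOn m (Ioc 0 T)
  nonneg : ∀ t ∈ Ioc 0 T, 0 ≤ m t
  integrableOn : IntegrableOn (fun τ => m τ / τ) (Ioc 0 T)

theorem IsWeight.isDini {T : ℝ} {m : ℝ → ℝ} (hm : IsWeight T m) : IsDini T m :=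
  ⟨hm.2.1, fun t ht => (hm.2.2.1 t ht).le, hm.2.2.2⟩

theorem wphi_zero (m : ℝ → ℝ) : wphi m 0 = 0 := by
  simp only [wphi, Ioc_self, setIntegral_empty]

namespace IsDini

variable {T T' t : ℝ} {m : ℝ → ℝ}

theorem mono (hm : IsDini T m) (h : T' ≤ T) : IsDini T' m where
  continuousOn := hm.continuousOn.mono (Ioc_subset_Ioc_right h)
  nonneg t ht := hm.nonneg t (Ioc_subset_Ioc_right h ht)
  integrableOn := hm.integrableOn.mono_set (Ioc_subset_Ioc_right h)

theorem continuousOn_div (hm : IsDini T m) : ContinuousOn (fun τ => m τ / τ) (Ioc 0 T) :=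
  hm.continuousOn.div continuousOn_id fun _ ht => ht.1.ne'

theorem div_nonneg (hm : IsDini T m) (ht : t ∈ Ioc 0 T) : 0 ≤ m t / t :=
  _root_.div_nonneg (hm.nonneg t ht) ht.1.le

theorem continuousOn_wphi (hm : IsDini T m) : ContinuousOn (wphi m) (Icc 0 T) :=
  continuousOn_setIntegral_Ioc hm.integrableOn

theorem hasDerivAt_wphi (hm : IsDini T m) (ht : t ∈ Ioo 0 T) :
    HasDerivAt (wphi m) (m t / t) t :=
  (hasDerivWithinAt_setIntegral_Ioc hm.integrableOn hm.continuousOn_div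
    (Ioo_subset_Ioc_self ht)).hasDerivAt (Icc_mem_nhds ht.1 ht.2)

theorem monotoneOn_wphi (hm : IsDini T m) : MonotoneOn (wphi m) (Icc 0 T) := by
  intro s _ t ht hst
  refine setIntegral_mono_set (hm.integrableOn.mono_set (Ioc_subset_Ioc_right ht.2)) ?_
    (Ioc_subset_Ioc_right hst).eventuallyLE
  exact (ae_restrict_iff' measurableSet_Ioc).2
    (.of_forall fun τ hτ => hm.div_nonneg (Ioc_subset_Ioc_right ht.2 hτ))

theorem wphi_nonneg (hm : IsDini T m) (ht : t ∈ Icc 0 T) : 0 ≤ wphi m t :=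
  wphi_zero m ▸ hm.monotoneOn_wphi (left_mem_Icc.2 (ht.1.trans ht.2)) ht ht.1

theorem exists_wphi_lt (hm : IsDini T m) (hT : 0 < T) {ε : ℝ} (hε : 0 < ε) :
    ∃ t ∈ Ioc 0 T, wphi m t < ε := by
  have h0 : ∀ᶠ t in 𝓝[Icc 0 T] 0, wphi m t < ε :=
    (hm.continuousOn_wphi 0 (left_mem_Icc.2 hT.le)).eventually_lt_const (by rwa [wphi_zero])
  have hpos : ∃ᶠ t in 𝓝[Icc 0 T] (0 : ℝ), t ∈ Ioc 0 T := by
    rw [frequently_nhdsWithin_iff]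
    refine (mem_closure_iff_frequently.1 ?_).mono fun t ht => ⟨ht, Ioc_subset_Icc_self ht⟩
    rw [closure_Ioc hT.ne]
    exact left_mem_Icc.2 hT.le
  exact (hpos.and_eventually h0).exists

theorem integrableOn_wphi_pow (hm : IsDini T m) (n : ℕ) :
    IntegrableOn (fun τ => (n + 1) * wphi m τ ^ n * (m τ / τ)) (Ioc 0 T) := by
  rcases le_or_gt T 0 with hT | hT
  · simp only [Ioc_eq_empty hT.not_gt, integrableOn_empty]
  have hφ := hm.continuousOn_wphi.mono Ioc_subset_Icc_self
  refine (hm.integrableOn.const_mul ((n + 1) * wphi m T ^ n)).mono'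
    (((continuousOn_const.mul (hφ.pow n)).mul hm.continuousOn_div).aestronglyMeasurable
      measurableSet_Ioc)
    ((ae_restrict_iff' measurableSet_Ioc).2 (.of_forall fun τ hτ => ?_))
  have hτ' := Ioc_subset_Icc_self hτ
  have hφ0 := hm.wphi_nonneg hτ'
  have hmτ := hm.div_nonneg hτ
  rw [Real.norm_of_nonneg (by positivity)]
  gcongr
  exact hm.monotoneOn_wphi hτ' (right_mem_Icc.2 hT.le) hτ.2

theorem setIntegral_wphi_pow (hm : IsDini T m) (n : ℕ) (hT : 0 ≤ T) :
    ∫ τ in Ioc 0 T, (n + 1) * wphi m τ ^ n * (m τ / τ) = wphi m T ^ (n + 1) := by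
  rw [← intervalIntegral.integral_of_le hT,
    intervalIntegral.integral_eq_sub_of_hasDerivAt_of_le (f := fun t => wphi m t ^ (n + 1)) hT
      (hm.continuousOn_wphi.pow _) (fun t ht => ?_)
      (intervalIntegrable_of_integrableOn_Ioc (hm.integrableOn_wphi_pow n) (right_mem_Icc.2 hT)),
    wphi_zero, zero_pow n.succ_ne_zero, sub_zero]
  simpa only [Nat.cast_add, Nat.cast_one, Nat.add_sub_cancel] using
    (hm.hasDerivAt_wphi ht).fun_pow (n + 1)

end IsDini

/-- The right-hand side of the linear transport equation `∂w/∂s = (c w + b ∂w/∂x) / s`. -/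
def transportRate (c b w : ℝ → ℂ → ℂ) (s : ℝ) (x : ℂ) : ℂ :=
  (c s x * w s x + b s x * deriv (w s) x) / s

/-- The Picard operator `w ↦ ∫₀ᵗ (c w + b ∂w/∂x) ds/s` of the transport equation. -/
def picardStep (c b w : ℝ → ℂ → ℂ) (t : ℝ) (x : ℂ) : ℂ :=
  ∫ s in Ioc 0 t, transportRate c b w s x

/-- The coefficients `c`, `b` of the transport equation are in `X₀((0,T] × D_R)` and are bounded by
multiples `C m(t)`, `B m(t)` of a Dini function. -/
structure IsTransportCoeff (T R : ℝ) (m : ℝ → ℝ) (c b : ℝ → ℂ → ℂ) (C B : ℝ) : Prop where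
  isDini : IsDini T m
  memX0_c : MemX0 (Ioc 0 T) R c
  memX0_b : MemX0 (Ioc 0 T) R b
  norm_c_le : ∀ t ∈ Ioc 0 T, ∀ x ∈ ball (0 : ℂ) R, ‖c t x‖ ≤ C * m t
  norm_b_le : ∀ t ∈ Ioc 0 T, ∀ x ∈ ball (0 : ℂ) R, ‖b t x‖ ≤ B * m t
  C_nonneg : 0 ≤ C
  B_nonneg : 0 ≤ B

/-- The growth rate of the Picard iterates: each step multiplies their bound at `(t, x)` by
`transportConst R C B * φ(t) / (R - |x|)`. -/
def transportConst (R C B : ℝ) : ℝ := C * R + Real.exp 1 * B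

namespace IsTransportCoeff

variable {T R C B : ℝ} {m : ℝ → ℝ} {c b w : ℝ → ℂ → ℂ} (H : IsTransportCoeff T R m c b C B)
include H

theorem mono {T' R' : ℝ} (hT : T' ≤ T) (hR : R' ≤ R) : IsTransportCoeff T' R' m c b C B where
  isDini := H.isDini.mono hT
  memX0_c := H.memX0_c.mono (Ioc_subset_Ioc_right hT) hR
  memX0_b := H.memX0_b.mono (Ioc_subset_Ioc_right hT) hR
  norm_c_le t ht x hx := H.norm_c_le t (Ioc_subset_Ioc_right hT ht) x (ball_subset_ball hR hx)
  norm_b_le t ht x hx := H.norm_b_le t (Ioc_subset_Ioc_right hT ht) x (ball_subset_ball hR hx)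
  C_nonneg := H.C_nonneg
  B_nonneg := H.B_nonneg

theorem transportConst_nonneg (hR : 0 ≤ R) : 0 ≤ transportConst R C B :=
  add_nonneg (mul_nonneg H.C_nonneg hR) (mul_nonneg (Real.exp_nonneg 1) H.B_nonneg)

theorem norm_transportRate_le {s : ℝ} (hs : s ∈ Ioc 0 T) {x : ℂ} (hx : x ∈ ball 0 R) :
    ‖transportRate c b w s x‖ ≤ (C * ‖w s x‖ + B * ‖deriv (w s) x‖) * (m s / s) := by
  have hs0 := hs.1
  rw [transportRate, norm_div, norm_real, Real.norm_of_nonneg hs0.le, mul_div_assoc']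
  gcongr
  calc ‖c s x * w s x + b s x * deriv (w s) x‖
      ≤ ‖c s x‖ * ‖w s x‖ + ‖b s x‖ * ‖deriv (w s) x‖ := by
        simpa only [norm_mul] using norm_add_le (c s x * w s x) (b s x * deriv (w s) x)
    _ ≤ C * m s * ‖w s x‖ + B * m s * ‖deriv (w s) x‖ := by
        gcongr
        exacts [H.norm_c_le s hs x hx, H.norm_b_le s hs x hx]
    _ = (C * ‖w s x‖ + B * ‖deriv (w s) x‖) * m s := by ring

theorem memX0_transportRate (hw : MemX0 (Ioc 0 T) R w) :
    MemX0 (Ioc 0 T) R (transportRate c b w) := by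
  have hinv : MemX0 (Ioc 0 T) R fun s _ => (s : ℂ)⁻¹ := MemX0.const_space <|
    continuous_ofReal.continuousOn.inv₀ fun s hs => ofReal_ne_zero.2 hs.1.ne'
  have hmem := ((H.memX0_c.mul hw).add (H.memX0_b.mul hw.deriv)).mul hinv
  exact hmem

theorem exists_norm_transportRate_le (hw : MemX0 (Icc 0 T) R w) {ρ : ℝ} (hρ : ρ < R) :
    ∃ M, ∀ s ∈ Ioc 0 T, ∀ x ∈ ball (0 : ℂ) ρ, ‖transportRate c b w s x‖ ≤ M * (m s / s) := by
  obtain ⟨M, -, hM⟩ := hw.exists_norm_le hρ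
  obtain ⟨M', -, hM'⟩ := hw.deriv.exists_norm_le hρ
  refine ⟨C * M + B * M', fun s hs x hx => ?_⟩
  have hs' := Ioc_subset_Icc_self hs
  have hms := H.isDini.div_nonneg hs
  have hC := H.C_nonneg
  have hB := H.B_nonneg
  refine (H.norm_transportRate_le hs (ball_subset_ball hρ.le hx)).trans ?_
  gcongr
  exacts [hM s hs' x hx, hM' s hs' x hx]

theorem integrableOn_transportRate (hw : MemX0 (Icc 0 T) R w) {x : ℂ} (hx : x ∈ ball 0 R) :
    IntegrableOn (fun s => transportRate c b w s x) (Ioc 0 T) := by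
  obtain ⟨ρ, hxρ, hρ⟩ := exists_between (mem_ball_zero_iff.1 hx)
  obtain ⟨M, hM⟩ := H.exists_norm_transportRate_le hw hρ
  exact (H.memX0_transportRate (hw.mono Ioc_subset_Icc_self le_rfl)).integrableOn_of_norm_le
    (H.isDini.integrableOn.const_mul M) hx fun s hs => hM s hs x (mem_ball_zero_iff.2 hxρ)

theorem memX0_picardStep (hw : MemX0 (Icc 0 T) R w) :
    MemX0 (Icc 0 T) R (picardStep c b w) := by
  refine (H.memX0_transportRate (hw.mono Ioc_subset_Icc_self le_rfl)).setIntegral_Ioc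
    fun ρ hρ => ?_
  obtain ⟨M, hM⟩ := H.exists_norm_transportRate_le hw hρ
  exact ⟨_, H.isDini.integrableOn.const_mul M, hM⟩

theorem norm_transportRate_le_of_norm_le {ρ M : ℝ} {n : ℕ} (hw : MemX0 (Icc 0 T) R w) (hρ : ρ ≤ R)
    (hM : 0 ≤ M)
    (hwM : ∀ t ∈ Icc 0 T, ∀ x ∈ ball (0 : ℂ) ρ,
      ‖w t x‖ ≤ M * (transportConst R C B * wphi m t / (ρ - ‖x‖)) ^ n)
    {s : ℝ} (hs : s ∈ Ioc 0 T) {x : ℂ} (hx : x ∈ ball 0 ρ) :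
    ‖transportRate c b w s x‖ ≤ M * (transportConst R C B / (ρ - ‖x‖)) ^ (n + 1) *
      ((n + 1) * wphi m s ^ n * (m s / s)) := by
  have hs' := Ioc_subset_Icc_self hs
  have hδ : 0 < ρ - ‖x‖ := sub_pos.2 (mem_ball_zero_iff.1 hx)
  have hδR : ρ - ‖x‖ ≤ R := by linarith [norm_nonneg x]
  have hK := H.transportConst_nonneg (hδ.le.trans hδR)
  have hφ := H.isDini.wphi_nonneg hs'
  have hms := H.isDini.div_nonneg hs
  have hC := H.C_nonneg
  have hB := H.B_nonneg
  set A := M * (transportConst R C B * wphi m s) ^ n with hA_def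
  have hA : 0 ≤ A := by positivity
  have hw_le : ∀ y ∈ ball (0 : ℂ) ρ, ‖w s y‖ ≤ A / (ρ - ‖y‖) ^ n := fun y hy => by
    simpa only [div_pow, mul_div_assoc', hA_def] using hwM s hs' y hy
  have hderiv_le : ‖deriv (w s) x‖ ≤ Real.exp 1 * (n + 1) * A / (ρ - ‖x‖) ^ (n + 1) :=
    norm_deriv_le_of_norm_le_div_pow hA ((hw.2 s hs').mono (ball_subset_ball hρ)) hw_le hx
  set δ := ρ - ‖x‖
  have hw_le' : ‖w s x‖ ≤ (n + 1) * R * A / δ ^ (n + 1) :=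
    calc ‖w s x‖ ≤ A / δ ^ n := hw_le x hx
      _ = 1 * δ * A / δ ^ (n + 1) := by
          rw [one_mul, pow_succ', mul_div_mul_left _ _ hδ.ne']
      _ ≤ (n + 1) * R * A / δ ^ (n + 1) := by
          gcongr
          exact le_add_of_nonneg_left n.cast_nonneg
  calc ‖transportRate c b w s x‖
      ≤ (C * ‖w s x‖ + B * ‖deriv (w s) x‖) * (m s / s) :=
        H.norm_transportRate_le hs (ball_subset_ball hρ hx)
    _ ≤ (C * ((n + 1) * R * A / δ ^ (n + 1)) +
          B * (Real.exp 1 * (n + 1) * A / δ ^ (n + 1))) * (m s / s) := by gcongr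
    _ = M * transportConst R C B ^ n * (C * R + Real.exp 1 * B) / δ ^ (n + 1) *
          ((n + 1) * wphi m s ^ n * (m s / s)) := by
        rw [hA_def, mul_pow]
        ring
    _ = M * (transportConst R C B / δ) ^ (n + 1) * ((n + 1) * wphi m s ^ n * (m s / s)) := by
        rw [← transportConst, div_pow, pow_succ (transportConst R C B)]
        ring

theorem norm_picardStep_le {ρ M : ℝ} {n : ℕ} (hw : MemX0 (Icc 0 T) R w) (hρ : ρ ≤ R) (hM : 0 ≤ M)
    (hwM : ∀ t ∈ Icc 0 T, ∀ x ∈ ball (0 : ℂ) ρ,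
      ‖w t x‖ ≤ M * (transportConst R C B * wphi m t / (ρ - ‖x‖)) ^ n)
    {t : ℝ} (ht : t ∈ Icc 0 T) {x : ℂ} (hx : x ∈ ball 0 ρ) :
    ‖picardStep c b w t x‖ ≤ M * (transportConst R C B * wphi m t / (ρ - ‖x‖)) ^ (n + 1) := by
  have hm := H.isDini.mono ht.2
  calc ‖picardStep c b w t x‖
      ≤ ∫ s in Ioc 0 t, M * (transportConst R C B / (ρ - ‖x‖)) ^ (n + 1) *
          ((n + 1) * wphi m s ^ n * (m s / s)) :=
        norm_integral_le_of_norm_le ((hm.integrableOn_wphi_pow n).const_mul _)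
          ((ae_restrict_iff' measurableSet_Ioc).2 (.of_forall fun s hs =>
            H.norm_transportRate_le_of_norm_le hw hρ hM hwM (Ioc_subset_Ioc_right ht.2 hs) hx))
    _ = M * (transportConst R C B / (ρ - ‖x‖)) ^ (n + 1) * wphi m t ^ (n + 1) := by
        rw [integral_const_mul, hm.setIntegral_wphi_pow n ht.1]
    _ = M * (transportConst R C B * wphi m t / (ρ - ‖x‖)) ^ (n + 1) := by
        rw [mul_assoc, ← mul_pow, div_mul_eq_mul_div]

theorem picardStep_eq_self {u : ℝ → ℂ → ℂ} (hu : MemX0 (Icc 0 T) R u)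
    (hsol : SolvesLW (Icc 0 T ×ˢ ball 0 R) c b (fun _ _ => 0) u) {x : ℂ} (hx : x ∈ ball 0 R)
    (hu0 : u 0 x = 0) {t : ℝ} (ht : t ∈ Icc 0 T) : picardStep c b u t x = u t x := by
  have hsub : Icc 0 t ⊆ Icc 0 T := Icc_subset_Icc_right ht.2
  have hderiv : ∀ s ∈ Ioo 0 t, HasDerivAt (fun s => u s x) (transportRate c b u s x) s := by
    intro s hs
    have hs' : s ∈ Icc 0 T := hsub (Ioo_subset_Icc_self hs)
    have := hsol s x ⟨hs', hx⟩ hs.1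
    simp only [mem_prod, hx, and_true, ofPred_mem_eq, add_zero] at this
    exact this.hasDerivAt (Icc_mem_nhds hs.1 (hs.2.trans_le ht.2))
  rw [picardStep, ← intervalIntegral.integral_of_le ht.1,
    intervalIntegral.integral_eq_sub_of_hasDerivAt_of_le ht.1
      ((hu.continuousOn_time hx).mono hsub) hderiv
      (intervalIntegrable_of_integrableOn_Ioc (H.integrableOn_transportRate hu hx) ht),
    hu0, sub_zero]

theorem norm_le_of_solvesLW {u : ℝ → ℂ → ℂ} (hu : MemX0 (Icc 0 T) R u)
    (hsol : SolvesLW (Icc 0 T ×ˢ ball 0 R) c b (fun _ _ => 0) u)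
    (hu0 : ∀ x ∈ ball (0 : ℂ) R, u 0 x = 0) {ρ M : ℝ} (hρ : ρ ≤ R) (hM : 0 ≤ M)
    (huM : ∀ t ∈ Icc 0 T, ∀ x ∈ ball (0 : ℂ) ρ, ‖u t x‖ ≤ M) (n : ℕ) :
    ∀ t ∈ Icc 0 T, ∀ x ∈ ball (0 : ℂ) ρ,
      ‖u t x‖ ≤ M * (transportConst R C B * wphi m t / (ρ - ‖x‖)) ^ n := by
  induction n with
  | zero => simpa only [pow_zero, mul_one] using huM
  | succ n ih =>
    intro t ht x hx
    have hxR := ball_subset_ball hρ hx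
    rw [← H.picardStep_eq_self hu hsol hxR (hu0 x hxR) ht]
    exact H.norm_picardStep_le hu hρ hM ih ht hx

theorem eq_zero_of_solvesLW {u : ℝ → ℂ → ℂ} (hu : MemX0 (Icc 0 T) R u)
    (hsol : SolvesLW (Icc 0 T ×ˢ ball 0 R) c b (fun _ _ => 0) u)
    (hu0 : ∀ x ∈ ball (0 : ℂ) R, u 0 x = 0) {t : ℝ} (ht : t ∈ Icc 0 T) {x : ℂ}
    (hx : x ∈ ball 0 R) (htx : transportConst R C B * wphi m t + ‖x‖ < R) : u t x = 0 := by
  have hK := H.transportConst_nonneg ((norm_nonneg x).trans (mem_ball_zero_iff.1 hx).le)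
  have hKφ := mul_nonneg hK (H.isDini.wphi_nonneg ht)
  obtain ⟨ρ, hxρ, hρ⟩ := exists_between htx
  obtain ⟨M, hM, huM⟩ := hu.exists_norm_le hρ
  have hδ : 0 < ρ - ‖x‖ := by linarith
  have hlim : Tendsto (fun n => M * (transportConst R C B * wphi m t / (ρ - ‖x‖)) ^ n) atTop
      (𝓝 (M * 0)) :=
    (tendsto_pow_atTop_nhds_zero_of_lt_one (div_nonneg hKφ hδ.le)
      ((div_lt_one hδ).2 (by linarith))).const_mul M
  rw [mul_zero] at hlim
  exact norm_le_zero_iff.1 (ge_of_tendsto' hlim fun n =>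
    H.norm_le_of_solvesLW hu hsol hu0 hρ.le hM huM n t ht x (mem_ball_zero_iff.2 (by linarith)))

end IsTransportCoeff

theorem MemX0W.mono {W W' : Set (ℝ × ℂ)} {f : ℝ → ℂ → ℂ} (hf : MemX0W W f) (hW : W' ⊆ W) :
    MemX0W W' f :=
  ⟨hf.1.mono hW, fun t => (hf.2 t).mono fun _ hy => hW hy⟩

theorem MemX0W.add {W : Set (ℝ × ℂ)} {f g : ℝ → ℂ → ℂ} (hf : MemX0W W f) (hg : MemX0W W g) :
    MemX0W W fun t x => f t x + g t x :=
  ⟨hf.1.add hg.1, fun t => (hf.2 t).add (hg.2 t)⟩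

theorem MemX0W.sub {W : Set (ℝ × ℂ)} {f g : ℝ → ℂ → ℂ} (hf : MemX0W W f) (hg : MemX0W W g) :
    MemX0W W (f - g) :=
  ⟨hf.1.sub hg.1, fun t => (hf.2 t).sub (hg.2 t)⟩

theorem MemX0W.mul {W : Set (ℝ × ℂ)} {f g : ℝ → ℂ → ℂ} (hf : MemX0W W f) (hg : MemX0W W g) :
    MemX0W W fun t x => f t x * g t x :=
  ⟨hf.1.mul hg.1, fun t => (hf.2 t).mul (hg.2 t)⟩

theorem memX0W_prod_iff {S : Set ℝ} {R : ℝ} {f : ℝ → ℂ → ℂ} :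
    MemX0W (S ×ˢ ball 0 R) f ↔ MemX0 S R f := by
  refine and_congr_right fun _ => ⟨fun h t ht => (h t).mono fun y hy => ⟨ht, hy⟩, fun h t => ?_⟩
  by_cases ht : t ∈ S
  · exact (h t ht).mono fun y hy => hy.2
  · exact fun y hy => absurd hy.1 ht

theorem SolvesLW.mono {W W' : Set (ℝ × ℂ)} {a b g w : ℝ → ℂ → ℂ} (h : SolvesLW W a b g w)
    (hW : W' ⊆ W) : SolvesLW W' a b g w :=
  fun t x htx ht => (h t x (hW htx) ht).mono fun _ hs => hW hs

theorem SolvesLW.sub {W : Set (ℝ × ℂ)} {lam b v v' : ℝ → ℂ → ℂ}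
    (h : SolvesLW W lam b (fun _ _ => 0) v) (h' : SolvesLW W lam b (fun _ _ => 0) v')
    (hv : ∀ p ∈ W, DifferentiableAt ℂ (v p.1) p.2)
    (hv' : ∀ p ∈ W, DifferentiableAt ℂ (v' p.1) p.2) :
    SolvesLW W lam b (fun _ _ => 0) (v - v') := by
  intro t x htx ht
  refine ((h t x htx ht).sub (h' t x htx ht)).congr_deriv ?_
  rw [Pi.sub_apply, Pi.sub_apply, deriv_sub (hv _ htx) (hv' _ htx)]
  ring

section Wset

variable {T R R' r : ℝ} {m : ℝ → ℝ} {f : ℝ → ℂ → ℂ}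

theorem isOpen_Wset_slice (m : ℝ → ℝ) (T R r t : ℝ) : IsOpen {y : ℂ | (t, y) ∈ Wset m T R r} := by
  have hopen : IsOpen {y : ℂ | wphi m t / r + ‖y‖ < R} :=
    isOpen_lt (by fun_prop) continuous_const
  exact (isOpen_const (p := t ∈ Icc 0 T)).inter (isOpen_ball.inter hopen)

theorem Wset_subset_prod (m : ℝ → ℝ) (T R r : ℝ) : Wset m T R r ⊆ Icc 0 T ×ˢ ball 0 R :=
  fun _ hp => ⟨hp.1, hp.2.1⟩

theorem IsDini.mem_Wset_iff (hm : IsDini T m) (hr : 0 < r) {t : ℝ} {x : ℂ} :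
    (t, x) ∈ Wset m T R r ↔ t ∈ Icc 0 T ∧ wphi m t / r + ‖x‖ < R := by
  refine ⟨fun h => ⟨h.1, h.2.2⟩, fun h => ⟨h.1, mem_ball_zero_iff.2 ?_, h.2⟩⟩
  linarith [_root_.div_nonneg (hm.wphi_nonneg h.1) hr.le]

theorem IsDini.Wset_slice_eq_ball (hm : IsDini T m) (hr : 0 < r) {t : ℝ} (ht : t ∈ Icc 0 T) :
    {y : ℂ | (t, y) ∈ Wset m T R r} = ball 0 (R - wphi m t / r) := by
  ext y
  simp only [mem_ofPred_eq, hm.mem_Wset_iff hr, ht, true_and, mem_ball_zero_iff, lt_sub_iff_add_lt']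

theorem IsDini.Icc_prod_closedBall_subset_Wset (hm : IsDini T m) (hr : 0 < r) {t δ : ℝ} {x : ℂ}
    (ht : t ∈ Icc 0 T) (h : wphi m t / r + ‖x‖ + δ < R) :
    Icc 0 t ×ˢ closedBall x δ ⊆ Wset m T R r := by
  rintro ⟨s, y⟩ ⟨hs, hy⟩
  have hsT : s ∈ Icc 0 T := ⟨hs.1, hs.2.trans ht.2⟩
  refine (hm.mem_Wset_iff hr).2 ⟨hsT, ?_⟩
  have hφ : wphi m s / r ≤ wphi m t / r := by
    gcongr
    exact hm.monotoneOn_wphi hsT ht hs.2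
  linarith [norm_le_norm_add_norm_sub' y x, mem_closedBall_iff_norm.1 hy]

theorem IsDini.exists_Icc_prod_closedBall_subset_Wset (hm : IsDini T m) (hr : 0 < r) (hT : 0 < T)
    (hR' : R' < R) : ∃ T' ∈ Ioc 0 T, Icc 0 T' ×ˢ closedBall (0 : ℂ) R' ⊆ Wset m T R r := by
  obtain ⟨T', hT', hφ⟩ := hm.exists_wphi_lt hT (mul_pos (sub_pos.2 hR') hr)
  refine ⟨T', hT', hm.Icc_prod_closedBall_subset_Wset hr (Ioc_subset_Icc_self hT') ?_⟩
  rw [← div_lt_iff₀ hr] at hφ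
  rw [norm_zero]
  linarith

theorem IsDini.mem_Wset_of_le (hm : IsDini T m) (hr : 0 < r) {s t : ℝ} {x : ℂ}
    (h : (t, x) ∈ Wset m T R r) (hs : s ∈ Icc 0 t) : (s, x) ∈ Wset m T R r :=
  hm.Icc_prod_closedBall_subset_Wset (δ := 0) hr h.1 (by simpa only [add_zero] using h.2.2)
    ⟨hs, mem_closedBall_self le_rfl⟩

theorem IsDini.Wset_mem_nhdsWithin (hm : IsDini T m) (hr : 0 < r) {p : ℝ × ℂ}
    (hp : p ∈ Wset m T R r) : Wset m T R r ∈ 𝓝[Icc 0 T ×ˢ univ] p := by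
  have hφ : ContinuousOn (fun p : ℝ × ℂ => wphi m p.1) (Icc 0 T ×ˢ univ) :=
    hm.continuousOn_wphi.comp continuousOn_fst fun _ hp => hp.1
  have hcont : ContinuousOn (fun p : ℝ × ℂ => wphi m p.1 / r + ‖p.2‖) (Icc 0 T ×ˢ univ) :=
    (hφ.div_const r).add (by fun_prop)
  filter_upwards [(hcont p ⟨hp.1, mem_univ _⟩).eventually_lt_const hp.2.2, self_mem_nhdsWithin]
    with q hq hqT using (hm.mem_Wset_iff hr).2 ⟨hqT.1, hq⟩

theorem nhdsWithin_Wset_le (m : ℝ → ℝ) (T R r : ℝ) (p : ℝ × ℂ) :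
    𝓝[Wset m T R r] p ≤ 𝓝[Icc 0 T ×ˢ univ] p :=
  nhdsWithin_mono _ fun _ hq => ⟨hq.1, mem_univ _⟩

theorem exists_mem_Wset_Icc_mem_nhdsWithin {t : ℝ} {x : ℂ}
    (h : (t, x) ∈ Wset m T R r) :
    ∃ t₁, (t₁, x) ∈ Wset m T R r ∧ t ≤ t₁ ∧
      Icc 0 t₁ ∈ 𝓝[{s : ℝ | (s, x) ∈ Wset m T R r}] t := by
  by_cases hlater : ∃ t₁ > t, (t₁, x) ∈ Wset m T R r
  · obtain ⟨t₁, htt₁, h₁⟩ := hlater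
    refine ⟨t₁, h₁, htt₁.le, ?_⟩
    filter_upwards [self_mem_nhdsWithin, mem_nhdsWithin_of_mem_nhds (Iio_mem_nhds htt₁)]
      with s hs hst₁ using ⟨hs.1.1, le_of_lt hst₁⟩
  · refine ⟨t, h, le_rfl, ?_⟩
    filter_upwards [self_mem_nhdsWithin] with s hs
      using ⟨hs.1.1, not_lt.1 fun hts => hlater ⟨s, hts, hs⟩⟩

theorem MemX0W.differentiableAt_Wset (hf : MemX0W (Wset m T R r) f) {p : ℝ × ℂ}
    (hp : p ∈ Wset m T R r) : DifferentiableAt ℂ (f p.1) p.2 :=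
  (hf.2 p.1).differentiableAt ((isOpen_Wset_slice m T R r p.1).mem_nhds hp)

theorem MemX0W.of_forall_radius_lt (hm : IsDini T m) (hr : 0 < r)
    (hf : ∀ ρ < R, MemX0W (Wset m T ρ r) f) : MemX0W (Wset m T R r) f := by
  have hexists : ∀ p ∈ Wset m T R r, ∃ ρ < R, p ∈ Wset m T ρ r := fun p hp => by
    obtain ⟨ρ, hpρ, hρ⟩ := exists_between hp.2.2
    exact ⟨ρ, hρ, (hm.mem_Wset_iff hr).2 ⟨hp.1, hpρ⟩⟩
  refine ⟨fun p hp => ?_, fun t x hx => ?_⟩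
  · obtain ⟨ρ, hρ, hpρ⟩ := hexists p hp
    exact ((hf ρ hρ).1 p hpρ).mono_of_mem_nhdsWithin
      (nhdsWithin_Wset_le m T R r p (hm.Wset_mem_nhdsWithin hr hpρ))
  · obtain ⟨ρ, hρ, hxρ⟩ := hexists (t, x) hx
    exact (((hf ρ hρ).2 t).differentiableAt
      ((isOpen_Wset_slice m T ρ r t).mem_nhds hxρ)).differentiableWithinAt

theorem MemX0W.deriv_Wset (hm : IsDini T m) (hr : 0 < r) (hf : MemX0W (Wset m T R r) f) :
    MemX0W (Wset m T R r) fun t => deriv (f t) := by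
  refine ⟨?_, fun t => (hf.2 t).deriv (isOpen_Wset_slice m T R r t)⟩
  rintro ⟨t, x⟩ hp
  have hW := hm.Wset_mem_nhdsWithin hr hp
  rw [nhdsWithin_prod_eq, nhdsWithin_univ] at hW
  obtain ⟨S, hS, V, hV, hSV⟩ := Filter.mem_prod_iff.1 hW
  obtain ⟨U, hUV, hU, hxU⟩ := _root_.mem_nhds_iff.1 hV
  have hSU : S ×ˢ U ⊆ Wset m T R r := (prod_mono_right hUV).trans hSV
  have hcont := continuousOn_deriv_of_continuousOn_uncurry hU (hf.1.mono hSU)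
    fun s hs => (hf.2 s).mono fun y hy => hSU ⟨hs, hy⟩
  refine (hcont (t, x) ⟨mem_of_mem_nhdsWithin hp.1 hS, hxU⟩).mono_of_mem_nhdsWithin
    (nhdsWithin_Wset_le m T R r _ ?_)
  rw [nhdsWithin_prod_eq, nhdsWithin_univ]
  exact prod_mem_prod hS (hU.mem_nhds hxU)

end Wset

/-- The terms `wₙ` of the Picard series: `w₀ = ψ` and `wₙ₊₁ = picardStep c b wₙ`. -/
def picardIterate (c b : ℝ → ℂ → ℂ) (ψ : ℂ → ℂ) : ℕ → ℝ → ℂ → ℂ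
  | 0 => fun _ => ψ
  | n + 1 => picardStep c b (picardIterate c b ψ n)

/-- The Picard series, the solution of the transport equation with initial value `ψ` at `t = 0`. -/
def picardSum (c b : ℝ → ℂ → ℂ) (ψ : ℂ → ℂ) (t : ℝ) (x : ℂ) : ℂ :=
  ∑' n, picardIterate c b ψ n t x

theorem picardSum_zero (c b : ℝ → ℂ → ℂ) (ψ : ℂ → ℂ) : picardSum c b ψ 0 = ψ := by
  funext x
  refine (tsum_eq_single 0 fun n hn => ?_).trans rfl
  obtain ⟨k, rfl⟩ := Nat.exists_eq_succ_of_ne_zero hn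
  simp only [picardIterate, picardStep, Ioc_self, setIntegral_empty]

namespace IsTransportCoeff

variable {T R C B r : ℝ} {m : ℝ → ℝ} {c b w : ℝ → ℂ → ℂ} {ψ : ℂ → ℂ}
  (H : IsTransportCoeff T R m c b C B)
include H

theorem memX0_picardIterate (hψ : DifferentiableOn ℂ ψ (ball 0 R)) (n : ℕ) :
    MemX0 (Icc 0 T) R (picardIterate c b ψ n) := by
  induction n with
  | zero => exact MemX0.const_time hψ
  | succ n ih => exact H.memX0_picardStep ih

theorem norm_picardIterate_le (hψ : DifferentiableOn ℂ ψ (ball 0 R)) {ρ M : ℝ} (hρ : ρ ≤ R)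
    (hM : 0 ≤ M) (hψM : ∀ x ∈ ball (0 : ℂ) ρ, ‖ψ x‖ ≤ M) (n : ℕ) :
    ∀ t ∈ Icc 0 T, ∀ x ∈ ball (0 : ℂ) ρ,
      ‖picardIterate c b ψ n t x‖ ≤ M * (transportConst R C B * wphi m t / (ρ - ‖x‖)) ^ n := by
  induction n with
  | zero => simpa only [picardIterate, pow_zero, mul_one] using fun _ _ => hψM
  | succ n ih =>
    exact fun t ht x hx => H.norm_picardStep_le (H.memX0_picardIterate hψ n) hρ hM ih ht hx

theorem exists_norm_picardIterate_le (hr : 0 < r) (hψ : DifferentiableOn ℂ ψ (ball 0 R)) {ρ : ℝ}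
    (hρ : ρ < R) : ∃ M, 0 ≤ M ∧ ∀ n t x, (t, x) ∈ Wset m T ρ r →
      ‖picardIterate c b ψ n t x‖ ≤ M * (transportConst R C B * r) ^ n := by
  obtain ⟨M, hM, hψM⟩ := (MemX0.const_time (S := Icc 0 0) hψ).exists_norm_le hρ
  refine ⟨M, hM, fun n t x h => ?_⟩
  have hφ := H.isDini.wphi_nonneg h.1
  have hδ : 0 < ρ - ‖x‖ := sub_pos.2 (mem_ball_zero_iff.1 h.2.1)
  have hK := H.transportConst_nonneg (by linarith [norm_nonneg x])
  have hφδ : wphi m t / (ρ - ‖x‖) ≤ r := by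
    have hlt : wphi m t / r < ρ - ‖x‖ := lt_sub_iff_add_lt.2 h.2.2
    rw [div_lt_iff₀ hr] at hlt
    rw [div_le_iff₀ hδ, mul_comm]
    exact hlt.le
  refine (H.norm_picardIterate_le hψ hρ.le hM (hψM 0 (left_mem_Icc.2 le_rfl)) n t h.1 x
    h.2.1).trans ?_
  rw [mul_div_assoc]
  gcongr

theorem memX0W_picardSum (hr : 0 < r) (hKr : transportConst R C B * r < 1)
    (hψ : DifferentiableOn ℂ ψ (ball 0 R)) : MemX0W (Wset m T R r) (picardSum c b ψ) := by
  refine MemX0W.of_forall_radius_lt H.isDini hr fun ρ hρ => ?_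
  obtain ⟨M, -, hM⟩ := H.exists_norm_picardIterate_le hr hψ hρ
  have hw := fun n => (memX0W_prod_iff.2 (H.memX0_picardIterate hψ n)).mono
    (W' := Wset m T ρ r) fun p hp => ⟨hp.1, ball_subset_ball hρ.le hp.2.1⟩
  rcases (Wset m T ρ r).eq_empty_or_nonempty with hempty | ⟨p, hp⟩
  · exact hempty ▸ ⟨continuousOn_empty _, fun _ => differentiableOn_empty⟩
  have hK := H.transportConst_nonneg
    (((norm_nonneg _).trans (mem_ball_zero_iff.1 hp.2.1).le).trans hρ.le)
  have hsum : Summable fun n => M * (transportConst R C B * r) ^ n :=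
    (summable_geometric_of_lt_one (by positivity) hKr).mul_left M
  exact ⟨continuousOn_tsum (fun n => (hw n).1) hsum fun n p hp => hM n p.1 p.2 hp, fun t =>
    differentiableOn_tsum_of_summable_norm hsum (fun n => (hw n).2 t)
      (isOpen_Wset_slice m T ρ r t) fun n y hy => hM n t y hy⟩

theorem norm_transportRate_le_of_forall_mem_closedBall {s : ℝ} (hs : s ∈ Ioc 0 T) {x : ℂ}
    (hx : x ∈ ball 0 R) {δ M : ℝ} (hδ : 0 < δ) (hd : DifferentiableOn ℂ (w s) (closedBall x δ))
    (hM : ∀ y ∈ closedBall x δ, ‖w s y‖ ≤ M) :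
    ‖transportRate c b w s x‖ ≤ (C + B / δ) * M * (m s / s) := by
  have hms := H.isDini.div_nonneg hs
  have hC := H.C_nonneg
  have hB := H.B_nonneg
  calc ‖transportRate c b w s x‖
      ≤ (C * ‖w s x‖ + B * ‖deriv (w s) x‖) * (m s / s) := H.norm_transportRate_le hs hx
    _ ≤ (C * M + B * (M / δ)) * (m s / s) := by
        gcongr
        exacts [hM x (mem_closedBall_self hδ.le),
          norm_deriv_le_of_forall_mem_closedBall_norm_le hδ hd hM]
    _ = (C + B / δ) * M * (m s / s) := by ring

theorem exists_hasSum_transportRate (hr : 0 < r) (hKr : transportConst R C B * r < 1)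
    (hψ : DifferentiableOn ℂ ψ (ball 0 R)) {t : ℝ} {x : ℂ} (h : (t, x) ∈ Wset m T R r) :
    ∃ D, ∀ s ∈ Ioc 0 t,
      (∀ n, ‖transportRate c b (picardIterate c b ψ n) s x‖ ≤
        D * (transportConst R C B * r) ^ n * (m s / s)) ∧
      HasSum (fun n => transportRate c b (picardIterate c b ψ n) s x)
        (transportRate c b (picardSum c b ψ) s x) := by
  obtain ⟨ρ, hxρ, hρ⟩ := exists_between h.2.2
  obtain ⟨δ, hδ, hδρ⟩ : ∃ δ > 0, wphi m t / r + ‖x‖ + δ < ρ :=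
    ⟨(ρ - (wphi m t / r + ‖x‖)) / 2, by linarith, by linarith⟩
  obtain ⟨M, -, hwM⟩ := H.exists_norm_picardIterate_le hr hψ hρ
  have hK := H.transportConst_nonneg ((norm_nonneg x).trans (mem_ball_zero_iff.1 h.2.1).le)
  have htube := H.isDini.Icc_prod_closedBall_subset_Wset hr h.1 hδρ
  have hsum : Summable fun n => M * (transportConst R C B * r) ^ n :=
    (summable_geometric_of_lt_one (by positivity) hKr).mul_left M
  refine ⟨(C + B / δ) * M, fun s hs => ?_⟩
  have hsT : s ∈ Ioc 0 T := ⟨hs.1, hs.2.trans h.1.2⟩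
  have htube_s : closedBall x δ ⊆ {y : ℂ | (s, y) ∈ Wset m T ρ r} := fun y hy =>
    htube ⟨Ioc_subset_Icc_self hs, hy⟩
  have hsx := htube_s (mem_closedBall_self hδ.le)
  have hd : ∀ n, DifferentiableOn ℂ (picardIterate c b ψ n s) {y : ℂ | (s, y) ∈ Wset m T ρ r} :=
    fun n => ((H.memX0_picardIterate hψ n).2 s (Ioc_subset_Icc_self hsT)).mono fun y hy =>
      ball_subset_ball hρ.le hy.2.1
  refine ⟨fun n => ?_, ?_⟩
  · refine (H.norm_transportRate_le_of_forall_mem_closedBall hsT h.2.1 hδ ((hd n).mono htube_s)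
      fun y hy => hwM n s y (htube_s hy)).trans_eq ?_
    rw [← mul_assoc (C + B / δ)]
  · have hval := (Summable.of_norm_bounded hsum fun n => hwM n s x hsx).hasSum
    have hder := hasSum_deriv_of_summable_norm hsum hd (isOpen_Wset_slice m T ρ r s)
      (fun n y hy => hwM n s y hy) hsx
    exact ((hval.mul_left _).add (hder.mul_left _)).div_const _

theorem continuousOn_transportRate_time (hr : 0 < r) (hw : MemX0W (Wset m T R r) w) {t : ℝ} {x : ℂ}
    (h : (t, x) ∈ Wset m T R r) : ContinuousOn (fun s => transportRate c b w s x) (Ioc 0 t) := by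
  have hsub : Ioc 0 t ⊆ Ioc 0 T := Ioc_subset_Ioc_right h.1.2
  have hmaps : MapsTo (fun s : ℝ => (s, x)) (Ioc 0 t) (Wset m T R r) := fun s hs =>
    H.isDini.mem_Wset_of_le hr h (Ioc_subset_Icc_self hs)
  have hw_time : ContinuousOn (fun s => w s x) (Ioc 0 t) := hw.1.comp (by fun_prop) hmaps
  have hderiv_time : ContinuousOn (fun s => deriv (w s) x) (Ioc 0 t) :=
    (hw.deriv_Wset H.isDini hr).1.comp (by fun_prop) hmaps
  exact ((((H.memX0_c.continuousOn_time h.2.1).mono hsub).mul hw_time).add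
    (((H.memX0_b.continuousOn_time h.2.1).mono hsub).mul hderiv_time)).div
    continuous_ofReal.continuousOn fun s hs => ofReal_ne_zero.2 hs.1.ne'

theorem hasSum_picardIterate_succ (hr : 0 < r) (hKr : transportConst R C B * r < 1)
    (hψ : DifferentiableOn ℂ ψ (ball 0 R)) {t : ℝ} {x : ℂ} (h : (t, x) ∈ Wset m T R r) :
    IntegrableOn (fun s => transportRate c b (picardSum c b ψ) s x) (Ioc 0 t) ∧
      HasSum (fun n => picardIterate c b ψ (n + 1) t x)
        (∫ s in Ioc 0 t, transportRate c b (picardSum c b ψ) s x) := by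
  have hK := H.transportConst_nonneg ((norm_nonneg x).trans (mem_ball_zero_iff.1 h.2.1).le)
  obtain ⟨D, hD⟩ := H.exists_hasSum_transportRate hr hKr hψ h
  have hm := H.isDini.mono h.1.2
  have hgeom : ∀ s, HasSum (fun n => D * (transportConst R C B * r) ^ n * (m s / s))
      (D * (1 - transportConst R C B * r)⁻¹ * (m s / s)) := fun s =>
    ((hasSum_geometric_of_lt_one (by positivity) hKr).mul_left D).mul_right _
  have hdom := hm.integrableOn.const_mul (D * (1 - transportConst R C B * r)⁻¹)
  have hcont := H.continuousOn_transportRate_time hr (H.memX0W_picardSum hr hKr hψ) h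
  refine ⟨hdom.mono' (hcont.aestronglyMeasurable measurableSet_Ioc)
    ((ae_restrict_iff' measurableSet_Ioc).2 (.of_forall fun s hs =>
      (hD s hs).2.norm_le_of_bounded (hgeom s) (hD s hs).1)), ?_⟩
  exact hasSum_integral_of_dominated_convergence
    (fun n s => D * (transportConst R C B * r) ^ n * (m s / s))
    (fun n => ((H.integrableOn_transportRate (H.memX0_picardIterate hψ n)
      h.2.1).mono_set (Ioc_subset_Ioc_right h.1.2)).aestronglyMeasurable)
    (fun n => (ae_restrict_iff' measurableSet_Ioc).2 (.of_forall fun s hs => (hD s hs).1 n))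
    (.of_forall fun s => (hgeom s).summable)
    (by simpa only [(hgeom _).tsum_eq] using hdom)
    ((ae_restrict_iff' measurableSet_Ioc).2 (.of_forall fun s hs => (hD s hs).2))

theorem picardSum_eq_add_picardStep (hr : 0 < r) (hKr : transportConst R C B * r < 1)
    (hψ : DifferentiableOn ℂ ψ (ball 0 R)) {t : ℝ} {x : ℂ} (h : (t, x) ∈ Wset m T R r) :
    picardSum c b ψ t x = ψ x + picardStep c b (picardSum c b ψ) t x :=
  (HasSum.zero_add (f := fun n => picardIterate c b ψ n t x)
    (H.hasSum_picardIterate_succ hr hKr hψ h).2).tsum_eq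

theorem solvesLW_picardSum (hr : 0 < r) (hKr : transportConst R C B * r < 1)
    (hψ : DifferentiableOn ℂ ψ (ball 0 R)) :
    SolvesLW (Wset m T R r) c b (fun _ _ => 0) (picardSum c b ψ) := by
  intro t x h ht
  obtain ⟨t₁, h₁, htt₁, hnhds⟩ := exists_mem_Wset_Icc_mem_nhdsWithin h
  have hderiv := hasDerivWithinAt_setIntegral_Ioc (H.hasSum_picardIterate_succ hr hKr hψ h₁).1
    (H.continuousOn_transportRate_time hr (H.memX0W_picardSum hr hKr hψ) h₁) ⟨ht, htt₁⟩
  have hsol := (hderiv.const_add (ψ x)).congr_of_mem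
    (fun s hs => H.picardSum_eq_add_picardStep hr hKr hψ (H.isDini.mem_Wset_of_le hr h₁ hs))
    ⟨ht.le, htt₁⟩
  rw [add_zero]
  exact hsol.mono_of_mem_nhdsWithin hnhds

end IsTransportCoeff

/-- The gauge transform `t ^ a(x) * w(t, x)`. Its value at `t = 0` is set to `0`, the limit as
`t → 0⁺` when `Re a > 0` and `w` is bounded; the junk value `log 0 = 0` would give `w(0, x)`. -/
def gaugeTransform (a : ℂ → ℂ) (w : ℝ → ℂ → ℂ) (t : ℝ) (x : ℂ) : ℂ :=
  if t = 0 then 0 else exp (a x * Real.log t) * w t x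

/-- The zeroth order coefficient of the equation satisfied by `gaugeTransform a w` when `w` solves
`t ∂w/∂t = λ w + b ∂w/∂x`; the first order coefficient remains `b`. -/
def gaugePotential (a : ℂ → ℂ) (lam b : ℝ → ℂ → ℂ) (t : ℝ) (x : ℂ) : ℂ :=
  lam t x + a x - b t x * deriv a x * Real.log t

theorem gaugePotential_gaugePotential_neg (a : ℂ → ℂ) (lam b : ℝ → ℂ → ℂ) :
    gaugePotential a (gaugePotential (-a) lam b) b = lam := by
  funext t x
  simp only [gaugePotential, Pi.neg_apply, deriv.neg]
  ring

section Gauge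

variable {W : Set (ℝ × ℂ)} {a : ℂ → ℂ} {lam b w : ℝ → ℂ → ℂ} {t : ℝ}

theorem gaugeTransform_zero (a : ℂ → ℂ) (w : ℝ → ℂ → ℂ) : gaugeTransform a w 0 = 0 :=
  funext fun _ => if_pos rfl

theorem gaugeTransform_of_ne_zero (ht : t ≠ 0) :
    gaugeTransform a w t = fun x => exp (a x * Real.log t) * w t x :=
  funext fun _ => if_neg ht

theorem exp_neg_mul_gaugeTransform (ht : t ≠ 0) (x : ℂ) :
    exp (-a x * Real.log t) * gaugeTransform a w t x = w t x := by
  rw [gaugeTransform_of_ne_zero ht, ← mul_assoc, ← exp_add, neg_mul, neg_add_cancel, exp_zero,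
    one_mul]

theorem norm_gaugeTransform_le (ht : t ∈ Icc 0 1) {d : ℝ} {x : ℂ} (hd : d ≤ (a x).re) :
    ‖gaugeTransform a w t x‖ ≤ t ^ d * ‖w t x‖ := by
  rcases ht.1.eq_or_lt' with rfl | ht0
  · rw [gaugeTransform_zero, Pi.zero_apply, norm_zero]
    positivity
  · rw [gaugeTransform_of_ne_zero ht0.ne', norm_mul, norm_exp, re_mul_ofReal, mul_comm (a x).re,
      ← Real.rpow_def_of_pos ht0]
    gcongr ?_ * _
    exact Real.rpow_le_rpow_of_exponent_ge ht0 ht.2 hd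

theorem SolvesLW.gaugePotential_gaugeTransform (ha : ∀ p ∈ W, DifferentiableAt ℂ a p.2)
    (hw : ∀ p ∈ W, DifferentiableAt ℂ (w p.1) p.2) (h : SolvesLW W lam b (fun _ _ => 0) w) :
    SolvesLW W (gaugePotential a lam b) b (fun _ _ => 0) (gaugeTransform a w) := by
  intro t x htx ht
  have hx : HasDerivAt (fun y => exp (a y * Real.log t) * w t y)
      (exp (a x * Real.log t) * (deriv a x * Real.log t) * w t x +
        exp (a x * Real.log t) * deriv (w t) x) x :=
    ((ha _ htx).hasDerivAt.mul_const _).cexp.mul (hw _ htx).hasDerivAt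
  have hlog : HasDerivAt (fun s : ℝ => (Real.log s : ℂ)) (t⁻¹ : ℝ) t :=
    (Real.hasDerivAt_log ht.ne').ofReal_comp
  have htime := ((hlog.const_mul (a x)).cexp.hasDerivWithinAt (s := {s | (s, x) ∈ W})).mul
    (h t x htx ht)
  have ht_ne : (t : ℂ) ≠ 0 := ofReal_ne_zero.2 ht.ne'
  simp only [gaugeTransform_of_ne_zero ht.ne', hx.deriv]
  refine (htime.congr_deriv ?_).congr_of_eventuallyEq ?_
    (by rw [gaugeTransform_of_ne_zero ht.ne']; rfl)
  · rw [gaugePotential, ofReal_inv]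
    field_simp
    ring
  · filter_upwards [mem_nhdsWithin_of_mem_nhds (Ioi_mem_nhds ht)] with s hs
    rw [gaugeTransform_of_ne_zero (ne_of_gt hs)]
    rfl

theorem MemX0W.gaugeTransform_of_tendsto (ha : ∀ p ∈ W, DifferentiableAt ℂ a p.2) (hw : MemX0W W w)
    (h0 : ∀ x, (0, x) ∈ W →
      Tendsto (fun p : ℝ × ℂ => gaugeTransform a w p.1 p.2) (𝓝[W] (0, x)) (𝓝 0)) :
    MemX0W W (gaugeTransform a w) := by
  refine ⟨fun ⟨t, x⟩ htx => ?_, fun t => ?_⟩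
  · rcases eq_or_ne t 0 with rfl | ht
    · rw [ContinuousWithinAt, gaugeTransform_zero]
      exact h0 x htx
    · have hlog : ContinuousAt (fun p : ℝ × ℂ => (Real.log p.1 : ℂ)) (t, x) :=
        continuous_ofReal.continuousAt.comp (continuousAt_fst.log ht)
      have ha' : ContinuousAt (fun p : ℝ × ℂ => a p.2) (t, x) :=
        ContinuousAt.comp (f := Prod.snd) (ha _ htx).continuousAt continuousAt_snd
      refine ((ha'.mul hlog).cexp.continuousWithinAt.mul (hw.1 (t, x) htx)).congr_of_eventuallyEq
        ?_ (by rw [gaugeTransform_of_ne_zero ht]; rfl)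
      filter_upwards [mem_nhdsWithin_of_mem_nhds
        (continuousAt_fst.eventually_ne (x := ((t, x) : ℝ × ℂ)) ht)] with p hp
      rw [gaugeTransform_of_ne_zero hp]
      rfl
  · rcases eq_or_ne t 0 with rfl | ht
    · rw [gaugeTransform_zero]
      exact differentiableOn_const 0
    · rw [gaugeTransform_of_ne_zero ht]
      exact fun x hx => (((ha (t, x) hx).mul_const _).cexp).differentiableWithinAt.mul (hw.2 t x hx)

theorem tendsto_gaugeTransform_zero {d : ℝ} (hd : 0 < d) (hWt : ∀ p ∈ W, p.1 ∈ Icc 0 1)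
    (ha : ∀ p ∈ W, d ≤ (a p.2).re) (hw : ContinuousOn (fun p : ℝ × ℂ => w p.1 p.2) W) {x : ℂ}
    (hx : (0, x) ∈ W) :
    Tendsto (fun p : ℝ × ℂ => gaugeTransform a w p.1 p.2) (𝓝[W] (0, x)) (𝓝 0) := by
  have hpow : Tendsto (fun p : ℝ × ℂ => p.1 ^ d) (𝓝[W] (0, x)) (𝓝 0) := by
    have hcont : Continuous fun p : ℝ × ℂ => p.1 ^ d :=
      continuous_fst.rpow_const fun _ => .inr hd.le
    simpa only [Real.zero_rpow hd.ne'] using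
      (hcont.tendsto (0, x)).mono_left nhdsWithin_le_nhds
  refine squeeze_zero_norm' ?_ (by simpa only [zero_mul] using hpow.mul (hw (0, x) hx).norm)
  filter_upwards [self_mem_nhdsWithin] with p hp using norm_gaugeTransform_le (hWt p hp) (ha p hp)

end Gauge

theorem tendsto_uncurry_zero_of_tendstoUniformlyOn {f : ℝ → ℂ → ℂ} {s : Set ℂ} (hf0 : f 0 = 0)
    (hf : TendstoUniformlyOn f 0 (𝓝[>] 0) s) (x : ℂ) :
    Tendsto (fun p : ℝ × ℂ => f p.1 p.2) (𝓝[Ici 0 ×ˢ s] (0, x)) (𝓝 0) := by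
  rw [Metric.tendsto_nhds]
  intro ε hε
  have hsmall : ∀ᶠ t in 𝓝[≥] (0 : ℝ), ∀ y ∈ s, dist (f t y) 0 < ε := by
    rw [← Ioi_insert, nhdsWithin_insert, eventually_sup, eventually_pure, hf0]
    refine ⟨fun _ _ => by rwa [Pi.zero_apply, dist_self], ?_⟩
    filter_upwards [Metric.tendstoUniformlyOn_iff.1 hf ε hε] with t ht y hy
    rw [dist_comm]
    exact ht y hy
  have hfst : Tendsto Prod.fst (𝓝[Ici 0 ×ˢ s] ((0 : ℝ), x)) (𝓝[≥] 0) :=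
    continuousWithinAt_fst.tendsto_nhdsWithin fun p hp => hp.1
  filter_upwards [hfst.eventually hsmall, self_mem_nhdsWithin] with p hp hps using hp p.2 hps.2

theorem MemX1W.mono {W W' : Set (ℝ × ℂ)} {f : ℝ → ℂ → ℂ} (hf : MemX1W W f) (hW : W' ⊆ W) :
    MemX1W W' f :=
  let ⟨hf0, g, hg, hfg⟩ := hf
  ⟨hf0.mono hW, g, hg.mono hW, fun t x htx ht => (hfg t x (hW htx) ht).mono fun _ hs => hW hs⟩

theorem MemX1W.memX1 {S : Set ℝ} {R : ℝ} {f : ℝ → ℂ → ℂ} (hf : MemX1W (S ×ˢ ball 0 R) f) :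
    MemX1 S R f :=
  let ⟨hf0, g, hg, hfg⟩ := hf
  ⟨memX0W_prod_iff.1 hf0, g, memX0W_prod_iff.1 hg, fun t ht ht0 x hx =>
    (hfg t x ⟨ht, hx⟩ ht0).mono fun _ hs => ⟨hs, hx⟩⟩

theorem MemX1W.memX1d_of_norm_le {T R M d : ℝ} {v : ℝ → ℂ → ℂ} (hT : 0 < T) (hR : 0 < R)
    (hv : MemX1W (Icc 0 T ×ˢ ball 0 R) v)
    (hvM : ∀ t ∈ Icc 0 T, ∀ x ∈ ball (0 : ℂ) R, ‖v t x‖ ≤ M * t ^ d) : MemX1d d v := by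
  refine ⟨T, hT, R / 2, half_pos hR,
    (hv.mono (prod_mono_right (ball_subset_ball (half_le_self hR.le)))).memX1,
    max (max M (M / (R / 2))) 1, by positivity, fun t ht x hx => ?_⟩
  have hpow : 0 ≤ t ^ d := Real.rpow_nonneg ht.1 d
  have hsub : closedBall x (R / 2) ⊆ ball 0 R :=
    closedBall_subset_ball' (by linarith [mem_ball.1 hx])
  refine max_le ((hvM t ht x (hsub (mem_closedBall_self (half_pos hR).le))).trans ?_) ?_
  · gcongr
    exact (le_max_left _ _).trans (le_max_left _ _)
  · calc ‖deriv (v t) x‖ ≤ M * t ^ d / (R / 2) :=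
          norm_deriv_le_of_forall_mem_closedBall_norm_le (half_pos hR)
            (((memX0W_prod_iff.1 hv.1).2 t ht).mono hsub) fun y hy => hvM t ht y (hsub hy)
      _ = M / (R / 2) * t ^ d := by ring
      _ ≤ _ := by
          gcongr
          exact (le_max_right _ _).trans (le_max_left _ _)

theorem exists_forall_mem_ball_le_re {R d : ℝ} {a : ℂ → ℂ} (hR : 0 < R)
    (ha : DifferentiableOn ℂ a (ball 0 R)) (hd : d < (a 0).re) :
    ∃ ρ ∈ Ioo 0 R, ∀ x ∈ ball (0 : ℂ) ρ, d ≤ (a x).re := by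
  have hcont : ContinuousAt (fun x => (a x).re) 0 :=
    continuous_re.continuousAt.comp (ha.differentiableAt (ball_mem_nhds 0 hR)).continuousAt
  obtain ⟨ε, hε, hεd⟩ := Metric.eventually_nhds_iff_ball.1 (hcont.eventually_const_lt hd)
  exact ⟨min ε (R / 2), ⟨by positivity, min_lt_of_right_lt (half_lt_self hR)⟩, fun x hx =>
    (hεd x (ball_subset_ball (min_le_left _ _) hx)).le⟩

section Wset

variable {T R R' r : ℝ} {m : ℝ → ℝ} {a : ℂ → ℂ} {lam b w v : ℝ → ℂ → ℂ}

theorem SolvesLW.memX1W (hm : IsDini T m) (hr : 0 < r) (hlam : MemX0 (Icc 0 T) R lam)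
    (hb : MemX0 (Icc 0 T) R b) (hv : MemX0W (Wset m T R r) v)
    (h : SolvesLW (Wset m T R r) lam b (fun _ _ => 0) v) : MemX1W (Wset m T R r) v := by
  have hsub := Wset_subset_prod m T R r
  refine ⟨hv, _, (((memX0W_prod_iff.2 hlam).mono hsub).mul hv).add
    (((memX0W_prod_iff.2 hb).mono hsub).mul (hv.deriv_Wset hm hr)), fun t x htx ht => ?_⟩
  have := h t x htx ht
  rwa [add_zero] at this

theorem MemX0W.tendstoUniformlyOn_nhdsGT (hm : IsDini T m) (hr : 0 < r) (hT : 0 < T)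
    (hw : MemX0W (Wset m T R r) w) (hR' : R' < R) :
    TendstoUniformlyOn w (w 0) (𝓝[>] 0) (ball 0 R') := by
  obtain ⟨T', hT', htube⟩ := hm.exists_Icc_prod_closedBall_subset_Wset hr hT hR'
  intro u hu
  obtain ⟨V, hV, hVu⟩ := (isCompact_closedBall (0 : ℂ) R').mem_uniformity_of_prod (f := w)
    (hw.1.mono htube) (left_mem_Icc.2 hT'.1.le) (symm_le_uniformity hu)
  filter_upwards [nhdsWithin_le_of_mem (Icc_mem_nhdsGT hT'.1) hV] with t ht x hx
    using hVu t ht x (ball_subset_closedBall hx)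

theorem MemX0W.tendstoUniformlyOn_exp_neg_mul_gaugeTransform (hm : IsDini T m) (hr : 0 < r)
    (hT : 0 < T) (hw : MemX0W (Wset m T R r) w) (hR' : R' < R) :
    TendstoUniformlyOn (fun t x => exp (-a x * Real.log t) * gaugeTransform a w t x) (w 0)
      (𝓝[>] 0) (ball 0 R') :=
  (hw.tendstoUniformlyOn_nhdsGT hm hr hT hR').congr <| eventually_nhdsWithin_of_forall
    fun _ ht x _ => (exp_neg_mul_gaugeTransform (ne_of_gt ht) x).symm

theorem MemX0W.gaugeTransform_Wset {d : ℝ} (hT : T ≤ 1) (ha : DifferentiableOn ℂ a (ball 0 R))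
    (hd : 0 < d) (hda : ∀ x ∈ ball (0 : ℂ) R, d ≤ (a x).re) (hw : MemX0W (Wset m T R r) w) :
    MemX0W (Wset m T R r) (gaugeTransform a w) :=
  hw.gaugeTransform_of_tendsto (fun _ hp => ha.differentiableAt (isOpen_ball.mem_nhds hp.2.1))
    fun _ hx => tendsto_gaugeTransform_zero hd (fun _ hp => ⟨hp.1.1, hp.1.2.trans hT⟩)
      (fun _ hp => hda _ hp.2.1) hw.1 hx

theorem MemX1W.memX1d_gaugeTransform {d : ℝ} (hm : IsDini T m) (hr : 0 < r) (hT : 0 < T)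
    (hT1 : T ≤ 1) (hR : 0 < R) (ha : DifferentiableOn ℂ a (ball 0 R)) (hda : d < (a 0).re)
    (hw : ContinuousOn (fun p : ℝ × ℂ => w p.1 p.2) (Wset m T R r))
    (hv : MemX1W (Wset m T R r) (gaugeTransform a w)) : MemX1d d (gaugeTransform a w) := by
  obtain ⟨ρ, hρ, hdρ⟩ := exists_forall_mem_ball_le_re hR ha hda
  obtain ⟨T', hT', htube⟩ := hm.exists_Icc_prod_closedBall_subset_Wset hr hT hρ.2
  have hcompact : IsCompact (Icc 0 T' ×ˢ closedBall (0 : ℂ) ρ) :=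
    isCompact_Icc.prod (isCompact_closedBall _ _)
  obtain ⟨M, hM⟩ := hcompact.exists_bound_of_continuousOn (hw.mono htube)
  refine (hv.mono ((prod_mono_right ball_subset_closedBall).trans htube)).memX1d_of_norm_le
    hT'.1 hρ.1 (M := M) fun t ht x hx => ?_
  have ht1 : t ∈ Icc 0 1 := ⟨ht.1, ht.2.trans (hT'.2.trans hT1)⟩
  calc ‖gaugeTransform a w t x‖ ≤ t ^ d * ‖w t x‖ := norm_gaugeTransform_le ht1 (hdρ x hx)
    _ ≤ t ^ d * M := by
        gcongr
        exacts [Real.rpow_nonneg ht.1 d, hM (t, x) ⟨ht, ball_subset_closedBall hx⟩]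
    _ = M * t ^ d := mul_comm _ _

end Wset

section Uniqueness

variable {T R R' r C B : ℝ} {m : ℝ → ℝ} {a ψ : ℂ → ℂ} {c lam b v v' : ℝ → ℂ → ℂ}

theorem MemX0W.eq_zero_of_forall_mem_ball (hm : IsDini T m) (hr : 0 < r) (hT : 0 < T)
    (hv : MemX0W (Wset m T R r) v) (hR' : 0 < R')
    (hv0 : ∀ t ∈ Ioc 0 T, ∀ x ∈ ball (0 : ℂ) R', v t x = 0) :
    ∀ p ∈ Wset m T R r, v p.1 p.2 = 0 := by
  have hpos : ∀ t x, (t, x) ∈ Wset m T R r → 0 < t → v t x = 0 := fun t x htx ht => by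
    have hball := hm.Wset_slice_eq_ball (R := R) hr htx.1
    have hx : x ∈ ball 0 (R - wphi m t / r) := hball ▸ htx
    have hvt : DifferentiableOn ℂ (v t) (ball 0 (R - wphi m t / r)) := hball ▸ hv.2 t
    refine (hvt.analyticOnNhd isOpen_ball).eqOn_zero_of_preconnected_of_eventuallyEq_zero
      (convex_ball _ _).isPreconnected (mem_ball_self (nonempty_ball.1 ⟨x, hx⟩)) ?_ hx
    filter_upwards [ball_mem_nhds 0 hR'] with y hy using hv0 t ⟨ht, htx.1.2⟩ y hy
  rintro ⟨t, x⟩ htx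
  rcases htx.1.1.eq_or_lt' with rfl | ht
  · have hxR : ‖x‖ < R := mem_ball_zero_iff.1 htx.2.1
    obtain ⟨T', hT', htube⟩ := hm.exists_Icc_prod_closedBall_subset_Wset hr hT hxR
    have hmem : ∀ s ∈ Icc 0 T', (s, x) ∈ Wset m T R r := fun s hs =>
      htube ⟨hs, mem_closedBall_zero_iff.2 le_rfl⟩
    have hcont : ContinuousOn (fun s => v s x) (Icc 0 T') :=
      hv.1.comp (f := fun s => (s, x)) (by fun_prop) hmem
    have hzero : EqOn (fun s => v s x) 0 (Ioc 0 T') := fun s hs =>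
      hpos s x (hmem s (Ioc_subset_Icc_self hs)) hs.1
    exact hzero.of_subset_closure hcont continuousOn_const Ioc_subset_Icc_self
      (closure_Ioc hT'.1.ne).ge (left_mem_Icc.2 hT'.1.le)
  · exact hpos t x htx ht

theorem IsTransportCoeff.eq_zero_of_tendstoUniformlyOn
    (H : IsTransportCoeff T R m (gaugePotential a lam b) b C B)
    (ha : DifferentiableOn ℂ a (ball 0 R)) (hv : MemX0 (Icc 0 T) R v)
    (hsol : SolvesLW (Icc 0 T ×ˢ ball 0 R) lam b (fun _ _ => 0) v)
    (hlim : TendstoUniformlyOn (gaugeTransform a v) 0 (𝓝[>] 0) (ball 0 R)) {t : ℝ}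
    (ht : t ∈ Ioc 0 T) {x : ℂ} (hx : x ∈ ball 0 R)
    (htx : transportConst R C B * wphi m t + ‖x‖ < R) : v t x = 0 := by
  have ha' : ∀ p ∈ Icc 0 T ×ˢ ball (0 : ℂ) R, DifferentiableAt ℂ a p.2 := fun p hp =>
    ha.differentiableAt (isOpen_ball.mem_nhds hp.2)
  have hu : MemX0 (Icc 0 T) R (gaugeTransform a v) := memX0W_prod_iff.1 <|
    (memX0W_prod_iff.2 hv).gaugeTransform_of_tendsto ha' fun y _ =>
      (tendsto_uncurry_zero_of_tendstoUniformlyOn (gaugeTransform_zero a v) hlim y).mono_left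
        (nhdsWithin_mono _ (prod_mono_left Icc_subset_Ici_self))
  have hu_sol := hsol.gaugePotential_gaugeTransform ha' fun p hp => hv.differentiableAt hp.1 hp.2
  have hu_zero : gaugeTransform a v t x = 0 :=
    H.eq_zero_of_solvesLW hu hu_sol (fun _ _ => congrFun (gaugeTransform_zero a v) _)
      (Ioc_subset_Icc_self ht) hx htx
  rw [gaugeTransform_of_ne_zero ht.1.ne'] at hu_zero
  exact (mul_eq_zero.1 hu_zero).resolve_left (exp_ne_zero _)

theorem IsTransportCoeff.transportConst_mul_wphi_le (H : IsTransportCoeff T R m c b C B)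
    (hr : 0 < r) (hKr : transportConst R C B * r ≤ 1) (hR' : R' ≤ R) {t : ℝ} (ht : t ∈ Icc 0 T) :
    transportConst R' C B * wphi m t ≤ wphi m T / r := by
  have hC := H.C_nonneg
  have hφ := H.isDini.wphi_nonneg ht
  calc transportConst R' C B * wphi m t ≤ transportConst R C B * wphi m t := by
        unfold transportConst
        gcongr
    _ ≤ 1 / r * wphi m t := by
        gcongr
        exact (le_div_iff₀ hr).2 hKr
    _ ≤ 1 / r * wphi m T := by
        gcongr
        exact H.isDini.monotoneOn_wphi ht (right_mem_Icc.2 (ht.1.trans ht.2)) ht.2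
    _ = wphi m T / r := one_div_mul_eq_div r _

theorem IsTransportCoeff.eq_zero_on_Wset
    (H : IsTransportCoeff T R m (gaugePotential a lam b) b C B) (hr : 0 < r)
    (hKr : transportConst R C B * r ≤ 1) (hT : 0 < T) (hTR : wphi m T / r < R / 2)
    (ha : DifferentiableOn ℂ a (ball 0 R)) (hv : MemX0W (Wset m T R r) v)
    (hsol : SolvesLW (Wset m T R r) lam b (fun _ _ => 0) v)
    (hlim : TendstoUniformlyOn (gaugeTransform a v) 0 (𝓝[>] 0) (ball 0 (R / 2))) :
    ∀ p ∈ Wset m T R r, v p.1 p.2 = 0 := by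
  have hT' : T ∈ Icc 0 T := right_mem_Icc.2 hT.le
  have hφ := div_nonneg (H.isDini.wphi_nonneg hT') hr.le
  have hR : R / 2 ≤ R := by linarith
  have hsub : Icc 0 T ×ˢ ball (0 : ℂ) (R / 2) ⊆ Wset m T R r :=
    (prod_mono_right ball_subset_closedBall).trans <|
      H.isDini.Icc_prod_closedBall_subset_Wset hr hT' (by rw [norm_zero]; linarith)
  refine hv.eq_zero_of_forall_mem_ball H.isDini hr hT (sub_pos.2 hTR) fun t ht x hx => ?_
  have hx_lt : ‖x‖ < R / 2 - wphi m T / r := mem_ball_zero_iff.1 hx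
  have hKφ := H.transportConst_mul_wphi_le hr hKr hR (Ioc_subset_Icc_self ht)
  exact (H.mono le_rfl hR).eq_zero_of_tendstoUniformlyOn (ha.mono (ball_subset_ball hR))
    (memX0W_prod_iff.1 (hv.mono hsub)) (hsol.mono hsub) hlim ht
    (mem_ball_zero_iff.2 (by linarith)) (by linarith)

theorem IsTransportCoeff.eq_of_tendstoUniformlyOn
    (H : IsTransportCoeff T R m (gaugePotential (-a) lam b) b C B) (hr : 0 < r)
    (hKr : transportConst R C B * r ≤ 1) (hT : 0 < T) (hTR : wphi m T / r < R / 2)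
    (ha : DifferentiableOn ℂ a (ball 0 R))
    (hv : MemX0W (Wset m T R r) v) (hsol : SolvesLW (Wset m T R r) lam b (fun _ _ => 0) v)
    (hlim : TendstoUniformlyOn (fun t x => exp (-a x * Real.log t) * v t x) ψ (𝓝[>] 0)
      (ball 0 (R / 2)))
    (hv' : MemX0W (Wset m T R r) v') (hsol' : SolvesLW (Wset m T R r) lam b (fun _ _ => 0) v')
    (hlim' : TendstoUniformlyOn (fun t x => exp (-a x * Real.log t) * v' t x) ψ (𝓝[>] 0)
      (ball 0 (R / 2))) :
    ∀ p ∈ Wset m T R r, v p.1 p.2 = v' p.1 p.2 := by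
  have hlim_sub : TendstoUniformlyOn (gaugeTransform (-a) (v - v')) 0 (𝓝[>] 0)
      (ball 0 (R / 2)) := by
    have h := hlim.sub hlim'
    rw [sub_self] at h
    refine h.congr (eventually_nhdsWithin_of_forall fun t ht x _ => ?_)
    rw [gaugeTransform_of_ne_zero (ne_of_gt ht)]
    exact (mul_sub _ _ _).symm
  have hsol_sub := hsol.sub hsol' (fun _ => hv.differentiableAt_Wset)
    fun _ => hv'.differentiableAt_Wset
  exact fun p hp => sub_eq_zero.1 <|
    H.eq_zero_on_Wset hr hKr hT hTR ha.neg (hv.sub hv') hsol_sub hlim_sub p hp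

end Uniqueness

section WellPosedness

variable {T R r C B : ℝ} {m : ℝ → ℝ} {a ψ : ℂ → ℂ} {lam b : ℝ → ℂ → ℂ}

theorem isTransportCoeff_gaugePotential {Λ L : ℝ} (hm : IsDini T m)
    (hlog : ∀ t ∈ Ioc 0 T, 1 ≤ |Real.log t|) (ha : DifferentiableOn ℂ a (ball 0 R))
    (hlam : MemX0 (Ioc 0 T) R lam) (hb : MemX0 (Ioc 0 T) R b) (hΛ : 0 ≤ Λ) (hB : 0 ≤ B)
    (hL : 0 ≤ L) (haL : ∀ x ∈ ball (0 : ℂ) R, ‖deriv a x‖ ≤ L)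
    (hlam_le : ∀ t ∈ Ioc 0 T, ∀ x ∈ ball (0 : ℂ) R, ‖lam t x + a x‖ ≤ Λ * m t)
    (hb_le : ∀ t ∈ Ioc 0 T, ∀ x ∈ ball (0 : ℂ) R, ‖b t x‖ * |Real.log t| ≤ B * m t) :
    IsTransportCoeff T R m (gaugePotential a lam b) b (Λ + B * L) B where
  isDini := hm
  memX0_c := by
    have ha' : MemX0 (Ioc 0 T) R fun _ => a := .const_time ha
    have hlog' : MemX0 (Ioc 0 T) R fun t _ => (Real.log t : ℂ) := .const_space <|
      continuous_ofReal.comp_continuousOn (continuousOn_id.log fun t ht => ht.1.ne')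
    exact (hlam.add ha').sub ((hb.mul ha'.deriv).mul hlog')
  memX0_b := hb
  norm_c_le t ht x hx := by
    have hbm := (mul_nonneg (norm_nonneg (b t x)) (abs_nonneg (Real.log t))).trans
      (hb_le t ht x hx)
    calc ‖lam t x + a x - b t x * deriv a x * Real.log t‖
        ≤ ‖lam t x + a x‖ + ‖b t x‖ * |Real.log t| * ‖deriv a x‖ := by
          refine (norm_sub_le _ _).trans_eq ?_
          rw [norm_mul, norm_mul, norm_real, Real.norm_eq_abs, mul_right_comm]
      _ ≤ Λ * m t + B * m t * L := by
          exact add_le_add (hlam_le t ht x hx)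
            (mul_le_mul (hb_le t ht x hx) (haL x hx) (norm_nonneg _) hbm)
      _ = (Λ + B * L) * m t := by ring
  norm_b_le t ht x hx :=
    (le_mul_of_one_le_right (norm_nonneg _) (hlog t ht)).trans (hb_le t ht x hx)
  C_nonneg := by positivity
  B_nonneg := hB

theorem one_le_abs_log_of_le_exp_neg_one {t : ℝ} (ht : 0 < t) (hte : t ≤ Real.exp (-1)) :
    1 ≤ |Real.log t| := by
  rw [le_abs]
  right
  linarith [(Real.log_le_iff_le_exp ht).2 hte]

theorem IsTransportCoeff.solvesLW_gaugeTransform_picardSum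
    (H : IsTransportCoeff T R m (gaugePotential (-a) lam b) b C B) (hr : 0 < r)
    (hKr : transportConst R C B * r < 1) (ha : DifferentiableOn ℂ a (ball 0 R))
    (hψ : DifferentiableOn ℂ ψ (ball 0 R)) :
    SolvesLW (Wset m T R r) lam b (fun _ _ => 0)
      (gaugeTransform a (picardSum (gaugePotential (-a) lam b) b ψ)) := by
  have h := (H.solvesLW_picardSum hr hKr hψ).gaugePotential_gaugeTransform
    (fun p hp => ha.differentiableAt (isOpen_ball.mem_nhds hp.2.1))
    fun _ => (H.memX0W_picardSum hr hKr hψ).differentiableAt_Wset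
  rwa [gaugePotential_gaugePotential_neg] at h

theorem exists_isTransportCoeff_gaugePotential {T₀ R₀ Λ : ℝ} (hT₀ : 0 < T₀) (hR₀ : 0 < R₀)
    (hm : IsDini T₀ m) (hlam : MemX0 (Icc 0 T₀) R₀ lam) (hb : MemX0 (Icc 0 T₀) R₀ b)
    (hre : 0 < (lam 0 0).re) (hΛ : 0 ≤ Λ) (hB : 0 ≤ B)
    (hlam_le : ∀ t ∈ Ioc 0 T₀, ∀ x ∈ ball (0 : ℂ) R₀, ‖lam t x - lam 0 x‖ ≤ Λ * m t)
    (hb_le : ∀ t ∈ Ioc 0 T₀, ∀ x ∈ ball (0 : ℂ) R₀, ‖b t x‖ * |Real.log t| ≤ B * m t) :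
    ∃ T ∈ Ioc 0 T₀, ∃ R ∈ Ioo 0 R₀, ∃ r > 0, ∃ C, T ≤ 1 ∧
      (∀ x ∈ ball (0 : ℂ) R, (lam 0 0).re / 2 ≤ (lam 0 x).re) ∧
      IsTransportCoeff T R m (gaugePotential (-lam 0) lam b) b C B ∧
      transportConst R C B * r < 1 ∧ wphi m T / r < R / 2 := by
  have h0 : (0 : ℝ) ∈ Icc 0 T₀ := left_mem_Icc.2 hT₀.le
  obtain ⟨R, hR, hre_le⟩ := exists_forall_mem_ball_le_re hR₀ (hlam.2 0 h0) (half_lt_self hre)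
  obtain ⟨L, hL, hL_le⟩ := hlam.deriv.exists_norm_le hR.2
  obtain ⟨T₁, hT₁, hT₁₀, hT₁e⟩ : ∃ T₁ > 0, T₁ ≤ T₀ ∧ T₁ ≤ Real.exp (-1) :=
    ⟨min T₀ (Real.exp (-1)), by positivity, min_le_left _ _, min_le_right _ _⟩
  have hIoc : Ioc 0 T₁ ⊆ Ioc 0 T₀ := Ioc_subset_Ioc_right hT₁₀
  have hball : ball (0 : ℂ) R ⊆ ball 0 R₀ := ball_subset_ball hR.2.le
  have H : IsTransportCoeff T₁ R m (gaugePotential (-lam 0) lam b) b (Λ + B * L) B :=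
    isTransportCoeff_gaugePotential (hm.mono hT₁₀)
      (fun t ht => one_le_abs_log_of_le_exp_neg_one ht.1 (ht.2.trans hT₁e))
      ((hlam.2 0 h0).mono hball).neg (hlam.mono (hIoc.trans Ioc_subset_Icc_self) hR.2.le)
      (hb.mono (hIoc.trans Ioc_subset_Icc_self) hR.2.le) hΛ hB hL
      (fun x hx => by simpa only [deriv.neg, norm_neg] using hL_le 0 h0 x hx)
      (fun t ht x hx => hlam_le t (hIoc ht) x (hball hx))
      (fun t ht x hx => hb_le t (hIoc ht) x (hball hx))
  have hK := H.transportConst_nonneg hR.1.le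
  obtain ⟨r, hr, hKr⟩ : ∃ r > 0, transportConst R (Λ + B * L) B * r < 1 :=
    ⟨1 / (transportConst R (Λ + B * L) B + 1), by positivity, by
      rw [mul_one_div, div_lt_one (by positivity)]
      exact lt_add_one _⟩
  obtain ⟨T, hT, hφ⟩ := H.isDini.exists_wphi_lt hT₁ (mul_pos (half_pos hR.1) hr)
  exact ⟨T, ⟨hT.1, hT.2.trans hT₁₀⟩, R, hR, r, hr, _,
    hT.2.trans (hT₁e.trans (Real.exp_le_one_iff.2 (by norm_num))), hre_le, H.mono hT.2 le_rfl,
    hKr, (div_lt_iff₀ hr).2 hφ⟩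

end WellPosedness

theorem statement13_general
    {T₀ R₀ : ℝ} (hT₀ : 0 < T₀) (hR₀ : 0 < R₀) {m : ℝ → ℝ} (hm : IsDini T₀ m)
    {lam b : ℝ → ℂ → ℂ} (hlam : MemX0 (Icc 0 T₀) R₀ lam) (hb : MemX0 (Icc 0 T₀) R₀ b)
    (hre : 0 < (lam 0 0).re) {Λ B : ℝ} (hΛ : 0 ≤ Λ) (hB : 0 ≤ B)
    (hlam_le : ∀ t ∈ Ioc 0 T₀, ∀ x ∈ ball (0 : ℂ) R₀, ‖lam t x - lam 0 x‖ ≤ Λ * m t)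
    (hb_le : ∀ t ∈ Ioc 0 T₀, ∀ x ∈ ball (0 : ℂ) R₀, ‖b t x‖ * |Real.log t| ≤ B * m t) :
    ∃ T > 0, ∃ R > 0, ∃ r > 0, T ≤ T₀ ∧ R ≤ R₀ ∧
      ∀ ψ : ℂ → ℂ, DifferentiableOn ℂ ψ (ball 0 R) →
        ∃ v : ℝ → ℂ → ℂ,
          MemX1W (Wset m T R r) v ∧
          SolvesLW (Wset m T R r) lam b (fun _ _ => 0) v ∧
          (∀ R', 0 < R' → R' < R →
            TendstoUniformlyOn (fun t x => exp (-lam 0 x * Real.log t) * v t x) ψ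
              (𝓝[>] 0) (ball 0 R')) ∧
          (∀ d, 0 < d → d < (lam 0 0).re → MemX1d d v) ∧
          ∀ v' : ℝ → ℂ → ℂ, MemX1W (Wset m T R r) v' →
            SolvesLW (Wset m T R r) lam b (fun _ _ => 0) v' →
            (∀ R', 0 < R' → R' < R →
              TendstoUniformlyOn (fun t x => exp (-lam 0 x * Real.log t) * v' t x) ψ
                (𝓝[>] 0) (ball 0 R')) →
            ∀ p ∈ Wset m T R r, v' p.1 p.2 = v p.1 p.2 := by
  obtain ⟨T, ⟨hT, hTT₀⟩, R, ⟨hR, hRR₀⟩, r, hr, C, hT1, hre_le, H, hKr, hTR⟩ :=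
    exists_isTransportCoeff_gaugePotential hT₀ hR₀ hm hlam hb hre hΛ hB hlam_le hb_le
  refine ⟨T, hT, R, hR, r, hr, hTT₀, hRR₀.le, fun ψ hψ => ?_⟩
  have hlam0 : DifferentiableOn ℂ (lam 0) (ball 0 R) :=
    (hlam.2 0 (left_mem_Icc.2 hT₀.le)).mono (ball_subset_ball hRR₀.le)
  have hw := H.memX0W_picardSum hr hKr hψ
  have hv := hw.gaugeTransform_Wset hT1 hlam0 (half_pos hre) hre_le
  have hsol := H.solvesLW_gaugeTransform_picardSum hr hKr hlam0 hψ
  have hv1 := hsol.memX1W H.isDini hr (hlam.mono (Icc_subset_Icc_right hTT₀) hRR₀.le)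
    (hb.mono (Icc_subset_Icc_right hTT₀) hRR₀.le) hv
  have hlim := fun R' (hR' : R' < R) =>
    picardSum_zero (gaugePotential (-lam 0) lam b) b ψ ▸
      hw.tendstoUniformlyOn_exp_neg_mul_gaugeTransform (a := lam 0) H.isDini hr hT hR'
  refine ⟨_, hv1, hsol, fun R' _ => hlim R',
    fun d _ hd => hv1.memX1d_gaugeTransform H.isDini hr hT hT1 hR hlam0 hd hw.1,
    fun v' hv' hsol' hlim' => ?_⟩
  exact H.eq_of_tendstoUniformlyOn hr hKr.le hT hTR hlam0 hv'.1 hsol'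
    (hlim' _ (half_pos hR) (half_lt_self hR)) hv hsol (hlim _ (half_lt_self hR))

/-- Lemma 6.2.1 (1): under `Re λ(0,0) > 0`, `|λ(t,x)-λ(0,x)| ≤ Λ m(t)` and
`|b| ≤ B m(t)/|log t|`, there are `T, R, r > 0` such that for every `ψ` holomorphic
on `D_R`, the equation `t ∂v/∂t - λ v - b ∂v/∂x = 0` has a unique solution
`v ∈ X₁(W)` with `t^{-λ(0,x)} v(t,x) → ψ(x)` as `t → 0⁺` uniformly on each `D_{R'}`,
`0 < R' < R`; moreover `v ∈ X₁^d` for every `0 < d < Re λ(0,0)`. -/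
theorem statement13
    (T₀ R₀ : ℝ) (hT₀ : 0 < T₀) (hT₀e : T₀ < 1 / Real.exp 1) (hR₀ : 0 < R₀)
    (m : ℝ → ℝ) (hm : IsWeight T₀ m)
    (lam b : ℝ → ℂ → ℂ)
    (hlamX : MemX0 (Set.Icc 0 T₀) R₀ lam) (hbX : MemX0 (Set.Icc 0 T₀) R₀ b)
    (hre : 0 < (lam 0 0).re)
    (Λ₁ : ℝ) (hΛ₁ : 0 < Λ₁)
    (hc2 : ∀ t ∈ Set.Ioc (0:ℝ) T₀, ∀ x ∈ Metric.ball (0:ℂ) R₀,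
      ‖lam t x - lam 0 x‖ ≤ Λ₁ * m t)
    (B : ℝ) (hB : 0 < B)
    (hc3 : ∀ t ∈ Set.Ioc (0:ℝ) T₀, ∀ x ∈ Metric.ball (0:ℂ) R₀,
      ‖b t x‖ ≤ B * m t / |Real.log t|)
    :
    ∃ T > (0:ℝ), ∃ R > (0:ℝ), ∃ r > (0:ℝ), T ≤ T₀ ∧ R ≤ R₀ ∧
      ∀ ψ : ℂ → ℂ, DifferentiableOn ℂ ψ (Metric.ball (0:ℂ) R) →
        ∃ v : ℝ → ℂ → ℂ,
          MemX1W (Wset m T R r) v ∧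
          SolvesLW (Wset m T R r) lam b (fun _ _ => 0) v ∧
          (∀ R' : ℝ, 0 < R' → R' < R →
            TendstoUniformlyOn
              (fun t x => Complex.exp (-(lam 0 x) * (Real.log t : ℂ)) * v t x) ψ
              (nhdsWithin 0 (Set.Ioi 0)) (Metric.ball (0:ℂ) R')) ∧
          (∀ d : ℝ, 0 < d → d < (lam 0 0).re → MemX1d d v) ∧
          -- uniqueness in X₁(W) :
          (∀ v' : ℝ → ℂ → ℂ, MemX1W (Wset m T R r) v' →
            SolvesLW (Wset m T R r) lam b (fun _ _ => 0) v' →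
            (∀ R' : ℝ, 0 < R' → R' < R →
              TendstoUniformlyOn
                (fun t x => Complex.exp (-(lam 0 x) * (Real.log t : ℂ)) * v' t x) ψ
                (nhdsWithin 0 (Set.Ioi 0)) (Metric.ball (0:ℂ) R')) →
            ∀ p ∈ Wset m T R r, v' p.1 p.2 = v p.1 p.2) := by
  exact statement13_general hT₀ hR₀ hm.isDini hlamX hbX hre hΛ₁.le hB.le hc2 fun t ht x hx =>
    mul_le_of_le_div₀ (mul_nonneg hB.le (hm.isDini.nonneg t ht)) (abs_nonneg _) (hc3 t ht x hx)
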